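/- arXiv:2503.24303 — 5 statements merged into one kernel-verified Lean document; each statement's English description precedes it below -/
import Mathlib

section
/- Let C be a linear code of length n over F_q with dimension k, generator matrix G, and parity check matrix H. If H·J_n·G^T ≠ 0, let P be a parity check matrix of the linear code of length k generated by the rows of H·J_n·G^T. Then P·G is a generator matrix of the largest reversible subcode of C; that is, the code generated by P·G is a reversible subcode of C containing every reversible subcode of C. -/
/-!
The row space of `P * G` is exactly `C ∩ R`, where `R` is the reversed code of `C`; this
intersection is clearly the largest reversible subcode of `C`. Indeed a codeword `c = u G` lies
in `R` iff its reversal `J cᵀ = J Gᵀ uᵀ` lies in `C`, i.e. iff `H J Gᵀ uᵀ = 0`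
(by `dualCode_dualCode`, `C` is the kernel of `H`), and the solutions `u` are the
row space of `P`. The rows of `P * G` are independent because `u ↦ u G` is injective.
-/

open Matrix

/-- Euclidean dual of a linear code of length `n`. -/
def dualCode {F : Type*} [Field F] {n : ℕ} (CC : Submodule F (Fin n → F)) :
    Submodule F (Fin n → F) where
  carrier := {v | ∀ c ∈ CC, ∑ i, c i * v i = 0}
  zero_mem' := by intro c hc; simp
  add_mem' := by
    intro a b ha hb c hc
    simp only [Set.mem_setOf_eq] at *
    simp only [Pi.add_apply, mul_add, Finset.sum_add_distrib, ha c hc, hb c hc, add_zero]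
  smul_mem' := by
    intro r v hv c hc
    simp only [Set.mem_setOf_eq] at *
    have h1 : ∀ i, c i * (r • v) i = r * (c i * v i) := by
      intro i; simp only [Pi.smul_apply, smul_eq_mul]; ring
    simp only [h1, ← Finset.mul_sum, hv c hc, mul_zero]

/-- `G` is a generator matrix of the code `CC`: its rows form a basis of `CC`. -/
def IsGenMat (F : Type*) [Field F] {k n : ℕ} (CC : Submodule F (Fin n → F))
    (G : Matrix (Fin k) (Fin n) F) : Prop :=
  LinearIndependent F (fun i => G i) ∧ Submodule.span F (Set.range (fun i => G i)) = CC

/-- the `n × n` backward identity (anti-diagonal) matrix. -/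
def Jmat (F : Type*) [Field F] (n : ℕ) : Matrix (Fin n) (Fin n) F :=
  (1 : Matrix (Fin n) (Fin n) F).submatrix id Fin.rev

/-- the reversed code of `CC`: reverse the coordinates of every codeword. -/
def reversedCode {F : Type*} [Field F] {n : ℕ} (CC : Submodule F (Fin n → F)) :
    Submodule F (Fin n → F) :=
  CC.map (LinearMap.funLeft F F Fin.rev)

theorem mem_dualCode_span_rows {F : Type*} [Field F] {m n : ℕ} (A : Matrix (Fin m) (Fin n) F)
    (v : Fin n → F) :
    v ∈ dualCode (Submodule.span F (Set.range (fun i => A i))) ↔ A *ᵥ v = 0 := by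
  constructor
  · intro h
    funext i
    exact h (A i) (Submodule.subset_span ⟨i, rfl⟩)
  · intro h c hc
    induction hc using Submodule.span_induction with
    | mem x hx =>
      obtain ⟨i, rfl⟩ := hx
      exact congrFun h i
    | zero => simp
    | add x y _ _ hx hy => simp [add_mul, Finset.sum_add_distrib, hx, hy]
    | smul a x _ hx => simp [mul_assoc, ← Finset.mul_sum, hx]

theorem dualCode_dualCode {F : Type*} [Field F] {n : ℕ} (C : Submodule F (Fin n → F)) :
    dualCode (dualCode C) = C := by
  apply le_antisymm
  · intro v hv
    by_contra hvC
    -- A functional vanishing on `C` but not at `v` is the dot product with some dual codeword.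
    obtain ⟨f, hfv, hf⟩ := Submodule.exists_le_ker_of_notMem hvC
    have hfx : ∀ x : Fin n → F, f x = ∑ i, x i * f (fun j => if i = j then 1 else 0) := fun x => by
      simpa using f.pi_apply_eq_sum_univ x
    apply hfv
    rw [hfx]
    simp only [mul_comm (v _)]
    exact hv (fun i => f (fun j => if i = j then 1 else 0)) fun c hc => by
      rw [← hfx]
      exact hf hc
  · intro v hv c hc
    simpa only [mul_comm] using hc v hv

theorem mem_span_rows {F : Type*} [Field F] {m n : ℕ} (A : Matrix (Fin m) (Fin n) F)
    (v : Fin n → F) :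
    v ∈ Submodule.span F (Set.range (fun i => A i)) ↔ ∃ u, u ᵥ* A = v := by
  rw [Submodule.mem_span_range_iff_exists_fun]
  simp only [Matrix.vecMul_eq_sum]

theorem Jmat_mulVec {F : Type*} [Field F] {n : ℕ} (v : Fin n → F) :
    Jmat F n *ᵥ v = fun i => v (Fin.rev i) := by
  funext i
  simp [Jmat, Matrix.mulVec, dotProduct, Matrix.one_apply, ← Fin.rev_eq_iff]

theorem mem_reversedCode {F : Type*} [Field F] {n : ℕ} (C : Submodule F (Fin n → F))
    (v : Fin n → F) : v ∈ reversedCode C ↔ (fun i => v (Fin.rev i)) ∈ C := by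
  constructor
  · rintro ⟨w, hw, rfl⟩
    simpa [LinearMap.funLeft] using hw
  · intro h
    refine ⟨_, h, ?_⟩
    funext i
    simp [LinearMap.funLeft]

/-- Let `C` be a linear code of length `n` over the finite field `F` with
dimension `k`, generator matrix `G` and parity check matrix `H`.  If `H * Jₙ * Gᵀ ≠ 0`,
and `P` is a parity check matrix of the code of length `k` generated by the rows of
`H * Jₙ * Gᵀ`, then `P * G` is a generator matrix of the largest reversible subcode of
`C`: the code `D` spanned by the rows of `P * G` has the rows of `P * G` as a basis,
is reversible, is contained in `C`, and contains every reversible subcode of `C`. -/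
theorem stmt4 {F : Type*} [Field F] [Fintype F] {n k t : ℕ}
    (CC : Submodule F (Fin n → F)) (hk : Module.finrank F CC = k)
    (G : Matrix (Fin k) (Fin n) F) (H : Matrix (Fin (n - k)) (Fin n) F)
    (hG : IsGenMat F CC G) (hH : IsGenMat F (dualCode CC) H)
    (hne : H * Jmat F n * G.transpose ≠ 0)
    (P : Matrix (Fin t) (Fin k) F)
    (hP : IsGenMat F
      (dualCode (Submodule.span F (Set.range (fun i => (H * Jmat F n * G.transpose) i)))) P) :
    IsGenMat F (Submodule.span F (Set.range (fun i => (P * G) i))) (P * G) ∧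
    reversedCode (Submodule.span F (Set.range (fun i => (P * G) i)))
      = Submodule.span F (Set.range (fun i => (P * G) i)) ∧
    Submodule.span F (Set.range (fun i => (P * G) i)) ≤ CC ∧
    ∀ S : Submodule F (Fin n → F), S ≤ CC → reversedCode S = S →
      S ≤ Submodule.span F (Set.range (fun i => (P * G) i)) := by
  have hC : ∀ v, v ∈ CC ↔ H *ᵥ v = 0 := fun v => by
    rw [← mem_dualCode_span_rows, hH.2, dualCode_dualCode]
  have hPspan : ∀ u, (∃ w, w ᵥ* P = u) ↔ (fun i => (u ᵥ* G) (Fin.rev i)) ∈ CC := fun u => by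
    rw [← mem_span_rows, hP.2, mem_dualCode_span_rows, hC, ← Matrix.mulVec_mulVec,
      ← Matrix.mulVec_mulVec, Matrix.mulVec_transpose, Jmat_mulVec]
  have hD : ∀ v, v ∈ Submodule.span F (Set.range (fun i => (P * G) i)) ↔
      v ∈ CC ∧ (fun i => v (Fin.rev i)) ∈ CC := fun v => by
    rw [mem_span_rows]
    constructor
    · rintro ⟨w, rfl⟩
      rw [← Matrix.vecMul_vecMul]
      refine ⟨?_, (hPspan _).1 ⟨w, rfl⟩⟩
      rw [← hG.2, mem_span_rows]
      exact ⟨_, rfl⟩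
    · rintro ⟨h1, h2⟩
      rw [← hG.2, mem_span_rows] at h1
      obtain ⟨u, rfl⟩ := h1
      obtain ⟨w, rfl⟩ := (hPspan u).2 h2
      exact ⟨w, (Matrix.vecMul_vecMul _ _ _).symm⟩
  refine ⟨⟨?_, rfl⟩, ?_, fun v hv => ((hD v).1 hv).1, fun S hS hrev v hv => ?_⟩
  · have h1 : Function.Injective P.vecMul := Matrix.vecMul_injective_iff.2 hP.1
    have h2 : Function.Injective G.vecMul := Matrix.vecMul_injective_iff.2 hG.1
    refine Matrix.vecMul_injective_iff.1 fun x y hxy => h1 (h2 ?_)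
    simpa only [Matrix.vecMul_vecMul] using hxy
  · ext v
    rw [mem_reversedCode, hD, hD]
    simp only [Fin.rev_rev]
    exact and_comm
  · refine (hD v).2 ⟨hS hv, hS ?_⟩
    rwa [← hrev, mem_reversedCode] at hv
end

section
/- Let C_1 be a Λ-MT code and C_2 a Δ-MT code over F_q, both with block lengths (m_1,…,m_ℓ), with Λ ≠ Δ. Suppose C_1 ∩ C_2 admits an MT structure with block lengths (m_1,…,m_ℓ), i.e., C_1 ∩ C_2 is Γ-MT for some tuple Γ of nonzero constants. If the minimum Hamming distance d(C_1) of C_1 satisfies d(C_1) > ℓ, then C_1 ∩ C_2 is a Λ-MT code; similarly, if d(C_2) > ℓ, then C_1 ∩ C_2 is a Δ-MT code. -/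
/-! For a codeword `v` of a subcode `D ⊆ C`, with `C` Λ-MT and `D` Γ-MT, both `T_Λ v` and `T_Γ v`
lie in `C`.  The two shifts agree except possibly at the first coordinate of each block, so their
difference is a codeword of `C` of weight at most `ℓ`; if `d(C) > ℓ` it vanishes, and
`T_Λ v = T_Γ v ∈ D`.  Both claims are the case `D = C₁ ∩ C₂`, with `C = C₁` or `C = C₂`. -/

open Polynomial Matrix

/-- constacyclic shift with constant `lam` on one block of length `m`:
`(a₀, …, a_{m-1}) ↦ (lam * a_{m-1}, a₀, …, a_{m-2})`. -/
def blockShift {F : Type*} [Field F] (lam : F) {m : ℕ} (a : Fin m → F) : Fin m → F :=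
  fun j => if j.val = 0 then lam * a ⟨m - 1, by have := j.isLt; omega⟩
           else a ⟨j.val - 1, by have := j.isLt; omega⟩

/-- `CC ⊆ ⊕ᵢ F^{m i}` is a Λ-multi-twisted code: it is invariant under the blockwise
constacyclic shift `T_Λ`. -/
def IsMT {F : Type*} [Field F] {ℓ : ℕ} (lam : Fin ℓ → F) {m : Fin ℓ → ℕ}
    (CC : Submodule F (∀ i, Fin (m i) → F)) : Prop :=
  ∀ v ∈ CC, (fun i => blockShift (lam i) (v i)) ∈ CC

/-- Hamming weight of a blocked vector. -/
def wt {F : Type*} [Field F] [DecidableEq F] {ℓ : ℕ} {m : Fin ℓ → ℕ}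
    (v : ∀ i, Fin (m i) → F) : ℕ :=
  ∑ i, (Finset.univ.filter fun j => v i j ≠ 0).card

/-- A vector supported on the first coordinates of the `ℓ` blocks has weight at most `ℓ`. -/
lemma wt_le_of_eq_zero {F : Type*} [Field F] [DecidableEq F] {ℓ : ℕ} {m : Fin ℓ → ℕ}
    (v : ∀ i, Fin (m i) → F) (h : ∀ i j, j.val ≠ 0 → v i j = 0) : wt v ≤ ℓ := by
  have key : ∀ i ∈ (Finset.univ : Finset (Fin ℓ)),
      (Finset.univ.filter fun j => v i j ≠ 0).card ≤ 1 := by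
    intro i _
    rw [Finset.card_le_one]
    intro a ha b hb
    simp only [Finset.mem_filter, Finset.mem_univ, true_and] at ha hb
    have ha0 : a.val = 0 := by
      by_contra hc
      exact ha (h i a hc)
    have hb0 : b.val = 0 := by
      by_contra hc
      exact hb (h i b hc)
    exact Fin.ext (ha0.trans hb0.symm)
  have := Finset.sum_le_card_nsmul Finset.univ _ 1 key
  simpa [wt] using this

/-- A multi-twisted subcode of a Λ-MT code with minimum distance above `ℓ` is itself Λ-MT. -/
lemma isMT_of_le {F : Type*} [Field F] [DecidableEq F] {ℓ : ℕ} {m : Fin ℓ → ℕ}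
    {lam gamma : Fin ℓ → F} {C D : Submodule F (∀ i, Fin (m i) → F)} (hDC : D ≤ C)
    (hC : IsMT lam C) (hD : IsMT gamma D) (hd : ∀ v ∈ C, v ≠ 0 → ℓ < wt v) : IsMT lam D := by
  intro v hv
  have h1 := hC v (hDC hv)
  have h2 := hD v hv
  have h3 := C.sub_mem h1 (hDC h2)
  have h4 : (fun i => blockShift (lam i) (v i)) - (fun i => blockShift (gamma i) (v i)) = 0 := by
    by_contra hne
    refine absurd (hd _ h3 hne) (not_lt.mpr (wt_le_of_eq_zero _ ?_))
    intro i j hj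
    simp [blockShift, hj]
  rw [sub_eq_zero.mp h4]
  exact h2

/-- Let `C₁` be Λ-MT and `C₂` be Δ-MT with the same block lengths and
`Λ ≠ Δ`, and suppose `C₁ ∩ C₂` admits an MT structure with these block lengths.  If the
minimum distance of `C₁` exceeds `ℓ` then `C₁ ∩ C₂` is Λ-MT; if the minimum distance of
`C₂` exceeds `ℓ` then `C₁ ∩ C₂` is Δ-MT. -/
theorem stmt8 {F : Type*} [Field F] [Fintype F] [DecidableEq F] {ℓ : ℕ} {m : Fin ℓ → ℕ}
    (hm : ∀ i, 0 < m i) {lam delta : Fin ℓ → F}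
    (hlam : ∀ i, lam i ≠ 0) (hdelta : ∀ i, delta i ≠ 0) (hne : lam ≠ delta)
    (C₁ C₂ : Submodule F (∀ i, Fin (m i) → F))
    (hC₁ : IsMT lam C₁) (hC₂ : IsMT delta C₂)
    (hMT : ∃ gamma : Fin ℓ → F, (∀ i, gamma i ≠ 0) ∧ IsMT gamma (C₁ ⊓ C₂)) :
    ((∀ v ∈ C₁, v ≠ 0 → ℓ < wt v) → IsMT lam (C₁ ⊓ C₂)) ∧
    ((∀ v ∈ C₂, v ≠ 0 → ℓ < wt v) → IsMT delta (C₁ ⊓ C₂)) := by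
  obtain ⟨gamma, -, hg⟩ := hMT
  exact ⟨isMT_of_le inf_le_left hC₁ hg, isMT_of_le inf_le_right hC₂ hg⟩
end

section
/- Let q = p^e and 0 ≤ κ < e. Let C_1 be a Λ-MT code and C_2 a Δ-MT code over F_q, both with index ℓ and block lengths (m_1,…,m_ℓ), with GPMs G_1 and G_2, and suppose σ^{e−κ}(Λ^{−1}) = Δ, i.e., σ^{e−κ}(λ_i^{−1}) = δ_i for all i. Assume each entry in the j-th column of G_1 has degree at most m_j. Let N = lcm(t_1 m_1,…,t_ℓ m_ℓ) (t_i the multiplicative order of λ_i), let Q be the QC code over F_q with index ℓ and co-index N generated by the rows of the stacked matrix [σ^{e−κ}(G_1(1/x)·diag(x^{m_i}))·diag((x^N−1)/(x^{m_i}−δ_i))·G_2^T ; (x^N−1)·I_ℓ], let Q be a GPM of Q, and let P satisfy P·Q = (x^N−1)·I_ℓ. Then C_1^{⊥κ} ∩ C_2 is a Δ-MT code with GPM P^T·G_2. -/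
/-! Write `A` for the matrix `σ^{e-κ}(G₁(1/x) diag(x^{mᵢ})) * diag((x^N - 1)/(x^{mᵢ} - δᵢ))`.

*The dual as a kernel* (`mem_dual_iff`). Raising the equations of the `κ`-Galois dual to the power
`p^{e-κ}` turns it into the Euclidean dual of `σ^{e-κ}(C₁)`. In `F[x]/(x^N - 1)`, realised as the
group algebra of `ZMod N` so that `x` is invertible and coefficients are directly available, the
element `∑ᵢ σ^{e-κ}(gᵢ)(1/x) * δᵢ (x^N - 1)/(x^{mᵢ} - δᵢ) * vᵢ(x)` has the dot product of the
blocked vectors of `σ^{e-κ}(g)` and `v` as its constant coefficient (`coeff_pairing_eq`). Since the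
module of `C₁` is closed under multiplication by `x`, orthogonality to `C₁` means that this element
vanishes for all `g` in the module, hence that it vanishes when `g` is a row of `G₁`
(`forall_pairing_eq_zero_iff`, `pairing_eq_zero_of_span`), that is, `A v ≡ 0` modulo `x^N - 1`
(`pairing_row`).

*The intersection.* A vector of the module of `C₂` is `G₂ᵀ u` for a unique `u`, and it lies in the
dual iff `A G₂ᵀ u ≡ 0` modulo `x^N - 1`. The rows of `A G₂ᵀ` and of `(x^N - 1) I` span the same
module as those of `Qm`, so the condition is `Qm u ≡ 0` modulo `x^N - 1`. As `P` and `Qm` commute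
with product `x^N - 1`, this says `u = P w` for some `w` (`forall_dvd_mulVec_iff`). Hence the module
of the intersection consists of the vectors `G₂ᵀ P w`, which is the row span of `Pᵀ G₂`. That the
intersection is multi-twisted follows, because multiplication by `x` is the multi-twisted shift.
-/

open Polynomial Matrix

/-- from a polynomial vector in `(F[x])^ℓ` to a blocked vector: reduce component `i`
modulo `x^{m i} - λᵢ` and take the coefficients. -/
noncomputable def toCode {F : Type*} [Field F] {ℓ : ℕ} (lam : Fin ℓ → F) (m : Fin ℓ → ℕ)
    (q : Fin ℓ → Polynomial F) : ∀ i, Fin (m i) → F :=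
  fun i j => ((q i) %ₘ (X ^ (m i) - Polynomial.C (lam i))).coeff j

/-- `G` is a generator polynomial matrix (GPM) of the Λ-MT code `CC`: its rows form a
minimal generating set (equivalently, since the corresponding submodule of `(F[x])^ℓ` has
rank `ℓ`, a linearly independent generating set) of the `F[x]`-submodule of `(F[x])^ℓ`
corresponding to `CC`, namely `{q | toCode lam m q ∈ CC}`. -/
def IsGPM {F : Type*} [Field F] {ℓ : ℕ} (lam : Fin ℓ → F) (m : Fin ℓ → ℕ)
    (CC : Submodule F (∀ i, Fin (m i) → F))
    (G : Matrix (Fin ℓ) (Fin ℓ) (Polynomial F)) : Prop :=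
  LinearIndependent (Polynomial F) (fun i => G i) ∧
  (Submodule.span (Polynomial F) (Set.range (fun i => G i)) :
      Set (Fin ℓ → Polynomial F)) = {q | toCode lam m q ∈ CC}

/-- the blocked code generated by a family of polynomial vectors: the image under
`toCode` of the `F[x]`-span of the family. -/
noncomputable def genCode {F : Type*} [Field F] {ℓ : ℕ} (lam : Fin ℓ → F) (m : Fin ℓ → ℕ)
    {ι : Type*} (rows : ι → (Fin ℓ → Polynomial F)) : Submodule F (∀ i, Fin (m i) → F) :=
  Submodule.span F
    (toCode lam m '' (Submodule.span (Polynomial F) (Set.range rows) :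
      Set (Fin ℓ → Polynomial F)))

/-- κ-Galois dual of a blocked code over a field of characteristic `p`:
`{v | ∀ c ∈ C, ∑ᵢⱼ c i j * (v i j)^(p^κ) = 0}`. -/
def galoisDualMT (p κ : ℕ) [Fact p.Prime] {F : Type*} [Field F] [CharP F p] {ℓ : ℕ}
    {m : Fin ℓ → ℕ} (CC : Submodule F (∀ i, Fin (m i) → F)) :
    Submodule F (∀ i, Fin (m i) → F) where
  carrier := {v | ∀ c ∈ CC, ∑ i, ∑ j, c i j * (v i j) ^ p ^ κ = 0}
  zero_mem' := by
    intro c hc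
    have hp : p ^ κ ≠ 0 := pow_ne_zero κ (Nat.Prime.ne_zero Fact.out)
    simp [zero_pow hp]
  add_mem' := by
    intro a b ha hb c hc
    haveI : ExpChar F p := ExpChar.prime Fact.out
    simp only [Set.mem_setOf_eq] at *
    have h1 : ∀ i j, ((a + b) i j) ^ p ^ κ = (a i j) ^ p ^ κ + (b i j) ^ p ^ κ := by
      intro i j; simp only [Pi.add_apply]; exact add_pow_expChar_pow (a i j) (b i j) p κ
    simp only [h1, mul_add, Finset.sum_add_distrib, ha c hc, hb c hc, add_zero]
  smul_mem' := by
    intro r v hv c hc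
    simp only [Set.mem_setOf_eq] at *
    have h1 : ∀ i, ∑ j, c i j * ((r • v) i j) ^ p ^ κ
        = r ^ p ^ κ * ∑ j, c i j * (v i j) ^ p ^ κ := by
      intro i
      rw [Finset.mul_sum]
      exact Finset.sum_congr rfl
        (fun j _ => by simp only [Pi.smul_apply, smul_eq_mul, mul_pow]; ring)
    simp only [h1, ← Finset.mul_sum, hv c hc, mul_zero]

/-- the `p^t`-power map `a ↦ a^(p^t)` (iterated Frobenius) as a ring homomorphism. -/
def powFrob (F : Type*) [Field F] (p t : ℕ) [Fact p.Prime] [CharP F p] : F →+* F where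
  toFun a := a ^ p ^ t
  map_one' := one_pow _
  map_mul' a b := mul_pow a b _
  map_zero' := zero_pow (pow_ne_zero t (Nat.Prime.ne_zero Fact.out))
  map_add' a b := by
    haveI : ExpChar F p := ExpChar.prime Fact.out
    exact add_pow_expChar_pow a b p t


lemma natDegree_lt_of_degree_lt' {F : Type*} [Field F] {f : F[X]} {m : ℕ} (hm : 0 < m)
    (hf : f.degree < m) : f.natDegree < m := by
  rcases eq_or_ne f 0 with rfl | h
  · simpa using hm
  · exact (natDegree_lt_iff_degree_lt h).2 hf

/-! ### The group algebra of `ZMod N` and the one-block pairing -/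

/-- The reduction `F[X] → F[X] / (X ^ N - 1)`, the quotient being realised as the group algebra of
`ZMod N`, in which `X` becomes the invertible generator `single 1 1`. -/
noncomputable abbrev evU (F : Type*) [Field F] (N : ℕ) : F[X] →ₐ[F] AddMonoidAlgebra F (ZMod N) :=
  aeval (AddMonoidAlgebra.single (1 : ZMod N) (1 : F))

/-- The map `f ↦ f(1/x)` from `F[X]` to the group algebra of `ZMod N`, where `x = single 1 1`. -/
noncomputable abbrev evW (F : Type*) [Field F] (N : ℕ) : F[X] →ₐ[F] AddMonoidAlgebra F (ZMod N) :=
  aeval (AddMonoidAlgebra.single (-1 : ZMod N) (1 : F))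

section Cyclic

variable {F : Type*} [Field F] {N : ℕ}

lemma single_one_pow (z : ZMod N) (k : ℕ) :
    (AddMonoidAlgebra.single z (1 : F)) ^ k = AddMonoidAlgebra.single (k * z) 1 := by
  rw [AddMonoidAlgebra.single_pow, one_pow, nsmul_eq_mul]

lemma single_mul_single_neg :
    (AddMonoidAlgebra.single (1 : ZMod N) (1 : F)) * AddMonoidAlgebra.single (-1) 1 = 1 := by
  rw [AddMonoidAlgebra.single_mul_single, AddMonoidAlgebra.one_def]; simp

lemma evU_X_pow_sub_one : evU F N (X ^ N - 1) = 0 := by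
  simp [AddMonoidAlgebra.one_def]

lemma evU_eq_zero_iff (hN : 0 < N) (f : F[X]) : evU F N f = 0 ↔ (X ^ N - 1) ∣ f := by
  have hmonic : (X ^ N - 1 : F[X]).Monic := monic_X_pow_sub_C (1 : F) hN.ne'
  have hdegN : (X ^ N - 1 : F[X]).degree = N := degree_X_pow_sub_C hN (1 : F)
  constructor
  · intro h
    rw [← Polynomial.modByMonic_eq_zero_iff_dvd hmonic]
    have hr : (f %ₘ (X ^ N - 1)).degree < N := hdegN ▸ degree_modByMonic_lt f hmonic
    have h0 : evU F N (f %ₘ (X ^ N - 1)) = 0 := by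
      rw [← modByMonic_add_div f (X ^ N - 1), map_add, map_mul, evU_X_pow_sub_one, zero_mul,
        add_zero] at h
      exact h
    generalize f %ₘ (X ^ N - 1) = r at hr h0
    ext i
    by_cases hi : i < N
    · have h1 : (evU F N r).coeff (i : ZMod N) = r.coeff i := by
        rw [aeval_eq_sum_range' (natDegree_lt_of_degree_lt' hN hr)]
        rw [AddMonoidAlgebra.coeff_sum, Finsupp.finsetSum_apply,
          Finset.sum_eq_single i]
        · simp
        · intro b hb hbi
          rw [single_one_pow, AddMonoidAlgebra.smul_single, AddMonoidAlgebra.coeff_single,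
            Finsupp.single_apply, if_neg]
          intro h
          rw [mul_one, ZMod.natCast_eq_natCast_iff', Nat.mod_eq_of_lt hi,
            Nat.mod_eq_of_lt (Finset.mem_range.1 hb)] at h
          exact hbi h
        · intro h; exact absurd (Finset.mem_range.2 hi) h
      rw [← h1, h0]; simp
    · rw [coeff_zero]
      exact coeff_eq_zero_of_degree_lt (hr.trans_le (by exact_mod_cast not_lt.1 hi))
  · rintro ⟨q, rfl⟩
    rw [map_mul, evU_X_pow_sub_one, zero_mul]

/-- `x ^ m * f(1/x)` is the image of the reversal `reflect m f`. -/
lemma evW_mul_pow (m : ℕ) (f : F[X]) (hf : f.natDegree ≤ m) :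
    evW F N f * (AddMonoidAlgebra.single (1 : ZMod N) (1 : F)) ^ m = evU F N (reflect m f) := by
  let _ : Invertible (AddMonoidAlgebra.single (-1 : ZMod N) (1 : F)) :=
    ⟨AddMonoidAlgebra.single 1 1, single_mul_single_neg, by
      rw [mul_comm]; exact single_mul_single_neg⟩
  have h := eval₂_reflect_mul_pow (algebraMap F (AddMonoidAlgebra F (ZMod N)))
    (AddMonoidAlgebra.single (-1 : ZMod N) (1 : F)) m f hf
  change evU F N (reflect m f) * _ = evW F N f at h
  rw [← h, mul_assoc, ← mul_pow, mul_comm (AddMonoidAlgebra.single (-1) 1),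
    single_mul_single_neg, one_pow, mul_one]

lemma X_pow_sub_one_div {m M : ℕ} (hm : 0 < m) (hMN : N = m * M) {d : F} (hd : d ^ M = 1) :
    (X ^ N - 1 : F[X]) / (X ^ m - C d) =
      ∑ s ∈ Finset.range M, (X ^ m) ^ s * (C d) ^ (M - 1 - s) := by
  have h := geom_sum₂_mul (X ^ m : F[X]) (C d) M
  rw [← pow_mul, ← hMN, ← C_pow, hd, C_1] at h
  rw [← h]
  exact mul_div_cancel_right₀ _ (X_pow_sub_C_ne_zero hm d)

/-- The image of `d * (X ^ N - 1) / (X ^ m - d)` in the group algebra of `ZMod N`. It is the kernel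
of the pairing on one block of length `m`: the factor `d` replaces the `x ^ m` appearing in the
reciprocal `x ^ m * g(1/x)`, since `x ^ m` and `d` act on it in the same way. -/
noncomputable def blockKer (F : Type*) [Field F] (N m : ℕ) (d : F) : AddMonoidAlgebra F (ZMod N) :=
  d • evU F N ((X ^ N - 1) / (X ^ m - C d))

lemma blockKer_eq {m M : ℕ} (hm : 0 < m) (hMN : N = m * M) {d : F} (hd : d ^ M = 1) :
    blockKer F N m d = ∑ s ∈ Finset.range M,
      AddMonoidAlgebra.single ((m * s : ℕ) : ZMod N) (d * d ^ (M - 1 - s)) := by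
  rw [blockKer, X_pow_sub_one_div hm hMN hd, map_sum, Finset.smul_sum]
  refine Finset.sum_congr rfl fun s _ => ?_
  rw [← pow_mul, ← C_pow, mul_comm, ← smul_eq_C_mul, map_smul, map_pow, aeval_X, single_one_pow,
    AddMonoidAlgebra.smul_single, AddMonoidAlgebra.smul_single]
  simp

lemma evU_mul_blockKer {m M : ℕ} (hm : 0 < m) (hMN : N = m * M) {d : F} (hd : d ^ M = 1) :
    evU F N (X ^ m - C d) * blockKer F N m d = 0 := by
  have h := geom_sum₂_mul (X ^ m : F[X]) (C d) M
  rw [← pow_mul, ← hMN, ← C_pow, hd, C_1] at h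
  rw [blockKer, mul_smul_comm, ← map_mul, X_pow_sub_one_div hm hMN hd, mul_comm, h,
    evU_X_pow_sub_one, smul_zero]

/-- As `a * d = 1`, the polynomial `x⁻ᵐ - a` is a unit multiple of `x ^ m - d`. -/
lemma evW_mul_blockKer {m M : ℕ} (hm : 0 < m) (hMN : N = m * M) {a d : F} (had : a * d = 1)
    (hd : d ^ M = 1) :
    evW F N (X ^ m - C a) * blockKer F N m d = 0 := by
  have h : evW F N (X ^ m - C a) =
      -(AddMonoidAlgebra.single (-1 : ZMod N) (1 : F)) ^ m * a • evU F N (X ^ m - C d) := by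
    simp only [map_sub, map_pow, aeval_X, aeval_C, ← algebraMap_smul
      (AddMonoidAlgebra F (ZMod N)) a, smul_eq_mul]
    have hAD : algebraMap F (AddMonoidAlgebra F (ZMod N)) a * algebraMap F _ d = 1 := by
      rw [← map_mul, had, map_one]
    have : (AddMonoidAlgebra.single (-1 : ZMod N) (1 : F)) ^ m *
        (AddMonoidAlgebra.single (1 : ZMod N) (1 : F)) ^ m = 1 := by
      rw [← mul_pow, mul_comm, single_mul_single_neg, one_pow]
    linear_combination (algebraMap F (AddMonoidAlgebra F (ZMod N)) a) * this -
      (AddMonoidAlgebra.single (-1 : ZMod N) (1 : F)) ^ m * hAD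
  rw [h, mul_assoc, smul_mul_assoc, evU_mul_blockKer hm hMN hd, smul_zero, mul_zero]

/-- The monomials of degree less than `m` are orthonormal for the one-block pairing: among the
exponents `m * s + j - i` only the one with `s = 0`, `i = j` vanishes modulo `N`. -/
lemma coeff_blockKer {m M : ℕ} (hm : 0 < m) (hM : 0 < M) (hMN : N = m * M) {d : F} (hd : d ^ M = 1)
    {i j : ℕ} (hi : i < m) (hj : j < m) :
    ((AddMonoidAlgebra.single (-1 : ZMod N) (1 : F)) ^ i * blockKer F N m d *
      (AddMonoidAlgebra.single (1 : ZMod N) (1 : F)) ^ j).coeff 0 = if i = j then 1 else 0 := by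
  rw [blockKer_eq hm hMN hd, Finset.mul_sum, Finset.sum_mul, AddMonoidAlgebra.coeff_sum,
    Finsupp.finsetSum_apply]
  have key : ∀ s ∈ Finset.range M,
      ((AddMonoidAlgebra.single (-1 : ZMod N) (1 : F)) ^ i *
        AddMonoidAlgebra.single ((m * s : ℕ) : ZMod N) (d * d ^ (M - 1 - s)) *
        (AddMonoidAlgebra.single (1 : ZMod N) (1 : F)) ^ j).coeff 0 =
      if s = 0 then (if i = j then 1 else 0) else 0 := by
    intro s hs
    have hs := Finset.mem_range.1 hs
    rw [single_one_pow, single_one_pow, AddMonoidAlgebra.single_mul_single,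
      AddMonoidAlgebra.single_mul_single, AddMonoidAlgebra.coeff_single, Finsupp.single_apply]
    have hiff : ((i : ZMod N) * -1 + ((m * s : ℕ) : ZMod N) + (j : ZMod N) * 1 = 0) ↔
        (s = 0 ∧ i = j) := by
      have h1 : m * s + m ≤ N := by
        rw [hMN, ← Nat.mul_succ]; exact Nat.mul_le_mul_left m hs
      have h2 : ((i : ZMod N) * -1 + ((m * s : ℕ) : ZMod N) + (j : ZMod N) * 1 = 0) ↔
          ((m * s + j : ℕ) : ZMod N) = (i : ℕ) := by
        rw [← sub_eq_zero]; push_cast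
        constructor <;> intro h <;> linear_combination h
      rw [h2, ZMod.natCast_eq_natCast_iff', Nat.mod_eq_of_lt (by omega), Nat.mod_eq_of_lt (by omega)]
      constructor
      · intro h
        rcases Nat.eq_zero_or_pos s with h0 | h0
        · subst h0; simp at h; exact ⟨rfl, h.symm⟩
        · have := Nat.le_mul_of_pos_right m h0
          omega
      · rintro ⟨rfl, rfl⟩; simp
    simp only [hiff]
    by_cases h0 : s = 0
    · subst h0
      by_cases hij : i = j
      · simp [hij, ← pow_succ', Nat.sub_add_cancel hM, hd]
      · simp [hij]
    · simp [h0]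
  rw [Finset.sum_congr rfl key, Finset.sum_ite_eq', if_pos (Finset.mem_range.2 hM)]

/-- On one block, the constant coefficient of `g(1/x) * blockKer * v(x)` is the dot product of the
reduction of `g` modulo `X ^ m - a` with the reduction of `v` modulo `X ^ m - d`, `a * d = 1`. -/
lemma coeff_pairing {m M : ℕ} (hm : 0 < m) (hM : 0 < M) (hMN : N = m * M) {a d : F}
    (had : a * d = 1) (hd : d ^ M = 1) (g v : F[X]) :
    (evW F N g * blockKer F N m d * evU F N v).coeff 0 =
      ∑ k : Fin m, (g %ₘ (X ^ m - C a)).coeff k * (v %ₘ (X ^ m - C d)).coeff k := by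
  have hg : evW F N g * blockKer F N m d = evW F N (g %ₘ (X ^ m - C a)) * blockKer F N m d := by
    conv_lhs => rw [← modByMonic_add_div g (X ^ m - C a)]
    rw [map_add, map_mul, add_mul, mul_right_comm, evW_mul_blockKer hm hMN had hd, zero_mul, add_zero]
  have hv : blockKer F N m d * evU F N v = blockKer F N m d * evU F N (v %ₘ (X ^ m - C d)) := by
    conv_lhs => rw [← modByMonic_add_div v (X ^ m - C d)]
    rw [map_add, map_mul, mul_add, ← mul_assoc (blockKer F N m d),
      mul_comm (blockKer F N m d) (evU F N (X ^ m - C d)),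
      evU_mul_blockKer hm hMN hd, zero_mul, add_zero]
  have hdeg : ∀ (f : F[X]) (c : F), (f %ₘ (X ^ m - C c)).natDegree < m := fun f c => by
    refine natDegree_lt_of_degree_lt' hm ?_
    rw [← degree_X_pow_sub_C hm c]
    exact degree_modByMonic_lt f (monic_X_pow_sub_C c hm.ne')
  rw [hg, mul_assoc, hv]
  have h1 := hdeg g a
  have h2 := hdeg v d
  generalize g %ₘ (X ^ m - C a) = g' at h1
  generalize v %ₘ (X ^ m - C d) = v' at h2
  rw [aeval_eq_sum_range' h1, aeval_eq_sum_range' h2, Finset.sum_mul,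
    AddMonoidAlgebra.coeff_sum, Finsupp.finsetSum_apply,
    ← Fin.sum_univ_eq_sum_range (fun i => (AddMonoidAlgebra.coeff (_) 0 : F))]
  refine Finset.sum_congr rfl fun i _ => ?_
  rw [Finset.mul_sum, Finset.mul_sum, AddMonoidAlgebra.coeff_sum, Finsupp.finsetSum_apply,
    Finset.sum_eq_single i.val]
  · rw [mul_smul_comm, mul_smul_comm, smul_mul_assoc, ← mul_assoc, AddMonoidAlgebra.coeff_smul_apply,
      AddMonoidAlgebra.coeff_smul_apply, coeff_blockKer hm hM hMN hd i.2 i.2, if_pos rfl]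
    simp [mul_comm]
  · intro j hj hji
    rw [mul_smul_comm, mul_smul_comm, smul_mul_assoc, ← mul_assoc, AddMonoidAlgebra.coeff_smul_apply,
      AddMonoidAlgebra.coeff_smul_apply, coeff_blockKer hm hM hMN hd i.2 (Finset.mem_range.1 hj),
      if_neg (Ne.symm hji)]
    simp
  · intro h; exact absurd (Finset.mem_range.2 i.2) h

end Cyclic

/-! ### Multi-twisted codes and submodules of `F[X] ^ ℓ` -/

section ToCode

variable {F : Type*} [Field F] {ℓ : ℕ}

/-- `toCode` as an `F`-linear map. -/
noncomputable def toCodeₗ (lam : Fin ℓ → F) (m : Fin ℓ → ℕ) :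
    (Fin ℓ → F[X]) →ₗ[F] ∀ i, Fin (m i) → F where
  toFun := toCode lam m
  map_add' a b := by ext i j; simp [toCode, add_modByMonic]
  map_smul' r a := by ext i j; simp [toCode, smul_modByMonic]

lemma toCode_surjective (lam : Fin ℓ → F) {m : Fin ℓ → ℕ} (hm : ∀ i, 0 < m i) :
    Function.Surjective (toCode lam m) := by
  classical
  intro c
  refine ⟨fun i => Polynomial.ofFn (m i) (c i), ?_⟩
  ext i j
  rw [toCode, (modByMonic_eq_self_iff (monic_X_pow_sub_C _ (hm i).ne')).2]
  · exact ofFn_coeff_eq_val_of_lt _ j.2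
  · rw [degree_X_pow_sub_C (hm i)]; exact ofFn_degree_lt _

lemma dvd_of_toCode_eq_zero {lam : Fin ℓ → F} {m : Fin ℓ → ℕ} (hm : ∀ i, 0 < m i)
    {q : Fin ℓ → F[X]} (hq : toCode lam m q = 0) (i : Fin ℓ) :
    (X ^ m i - C (lam i)) ∣ q i := by
  have hmon := monic_X_pow_sub_C (lam i) (hm i).ne'
  rw [← modByMonic_eq_zero_iff_dvd hmon]
  ext k
  by_cases hk : k < m i
  · exact congrFun (congrFun hq i) ⟨k, hk⟩
  · rw [coeff_zero]
    refine coeff_eq_zero_of_degree_lt ((degree_modByMonic_lt _ hmon).trans_le ?_)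
    rw [degree_X_pow_sub_C (hm i)]
    exact_mod_cast not_lt.1 hk

/-- Multiplication by `X` corresponds to the multi-twisted shift. -/
lemma toCode_X_smul {lam : Fin ℓ → F} {m : Fin ℓ → ℕ} (hm : ∀ i, 0 < m i) (q : Fin ℓ → F[X]) :
    toCode lam m ((X : F[X]) • q) = fun i => blockShift (lam i) (toCode lam m q i) := by
  ext i j
  have hmon := monic_X_pow_sub_C (lam i) (hm i).ne'
  have hd := degree_X_pow_sub_C (hm i) (lam i)
  set f := X ^ m i - C (lam i) with hf
  set r := q i %ₘ f with hr
  have hrdeg : r.degree < m i := hd ▸ degree_modByMonic_lt (q i) hmon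
  have hcoeff : ∀ k, (X * r - C (r.coeff (m i - 1)) * f).coeff k =
      if k = 0 then lam i * r.coeff (m i - 1) else
        if k < m i then r.coeff (k - 1) else 0 := by
    intro k
    rw [coeff_sub, coeff_C_mul, hf, coeff_sub, coeff_X_pow, coeff_C]
    rcases k with _ | k
    · rw [if_neg (hm i).ne]; simp [mul_comm]
    · rw [coeff_X_mul]
      by_cases h : k + 1 = m i
      · simp [← h]
      · by_cases h' : k + 1 < m i
        · simp [h, h']
        · simp only [h, h', if_false, Nat.succ_ne_zero]
          rw [coeff_eq_zero_of_degree_lt (hrdeg.trans_le (by exact_mod_cast (by omega)))]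
          simp
  have hmod : (X * q i) %ₘ f = X * r - C (r.coeff (m i - 1)) * f := by
    refine (div_modByMonic_unique (X * (q i /ₘ f) + C (r.coeff (m i - 1))) _ hmon ⟨?_, ?_⟩).2
    · linear_combination X * (modByMonic_add_div (q i) f)
    · rw [hd, degree_lt_iff_coeff_zero]
      intro k hk
      rw [hcoeff, if_neg (by have := hm i; omega), if_neg (by omega)]
  change ((X * q i) %ₘ f).coeff j = _
  rw [hmod, hcoeff, blockShift]
  by_cases h0 : j.val = 0
  · simp [h0, toCode, hr, hf]
  · simp [h0, toCode, hr, hf]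

lemma isMT_of_isGPM {lam : Fin ℓ → F} {m : Fin ℓ → ℕ} (hm : ∀ i, 0 < m i)
    {CC : Submodule F (∀ i, Fin (m i) → F)} {G : Matrix (Fin ℓ) (Fin ℓ) F[X]}
    (hG : IsGPM lam m CC G) : IsMT lam CC := by
  intro v hv
  obtain ⟨q, rfl⟩ := toCode_surjective lam hm v
  have hq : q ∈ (Submodule.span F[X] (Set.range fun i => G i) : Set (Fin ℓ → F[X])) := by
    rw [hG.2]; exact hv
  have hXq := Submodule.smul_mem _ (X : F[X]) hq
  rw [← SetLike.mem_coe, hG.2] at hXq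
  rw [← toCode_X_smul hm]
  exact hXq

/-- A submodule containing the kernel of `toCode` is recovered from the code it generates. -/
lemma mem_genCode_iff {lam : Fin ℓ → F} {m : Fin ℓ → ℕ} (hm : ∀ i, 0 < m i)
    {ι : Type*} {rows : ι → (Fin ℓ → F[X])}
    (hrows : ∀ i, Pi.single i (X ^ m i - C (lam i)) ∈ Submodule.span F[X] (Set.range rows))
    (q : Fin ℓ → F[X]) :
    toCode lam m q ∈ genCode lam m rows ↔ q ∈ Submodule.span F[X] (Set.range rows) := by
  constructor
  · intro h
    have h' : toCodeₗ lam m q ∈ Submodule.span F (toCodeₗ lam m ''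
        ((Submodule.span F[X] (Set.range rows)).restrictScalars F : Set (Fin ℓ → F[X]))) := h
    rw [Submodule.span_image, Submodule.span_eq] at h'
    obtain ⟨q', hq', he⟩ := h'
    have h0 : toCode lam m (q - q') = 0 := by
      change toCodeₗ lam m (q - q') = 0
      rw [map_sub, he, sub_self]
    choose r hr using dvd_of_toCode_eq_zero hm h0
    have hsum : q - q' = ∑ i, r i • (Pi.single i (X ^ m i - C (lam i)) : Fin ℓ → F[X]) := by
      ext1 j
      rw [Finset.sum_apply, Finset.sum_eq_single j]
      · rw [hr]; simp [mul_comm]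
      · intro b _ hb; simp [hb.symm]
      · simp
    rw [← sub_add_cancel q q']
    refine Submodule.add_mem _ ?_ hq'
    rw [hsum]
    exact Submodule.sum_mem _ fun i _ => Submodule.smul_mem _ _ (hrows i)
  · intro h
    exact Submodule.subset_span ⟨q, h, rfl⟩

end ToCode

/-! ### The polynomial pairing detecting the Galois dual -/

section Dual

variable {F : Type*} [Field F] {ℓ : ℕ} {N : ℕ}

/-- The pairing `∑ᵢ gᵢ^φ(1/x) * δᵢ (x ^ N - 1) / (x ^ mᵢ - δᵢ) * vᵢ(x)` of two polynomial vectors, with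
values in the group algebra of `ZMod N`. Its constant coefficient is the `φ`-twisted dot product of
the corresponding blocked vectors (`coeff_pairing_eq`). -/
noncomputable def pairing (N : ℕ) (φ : F →+* F) (m : Fin ℓ → ℕ) (delta : Fin ℓ → F)
    (g v : Fin ℓ → F[X]) : AddMonoidAlgebra F (ZMod N) :=
  ∑ i, evW F N ((g i).map φ) * blockKer F N (m i) (delta i) * evU F N (v i)

lemma pairing_smul (φ : F →+* F) (m : Fin ℓ → ℕ) (delta : Fin ℓ → F) (r : F[X])
    (g v : Fin ℓ → F[X]) :
    pairing N φ m delta (r • g) v = evW F N (r.map φ) * pairing N φ m delta g v := by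
  rw [pairing, pairing, Finset.mul_sum]
  refine Finset.sum_congr rfl fun i _ => ?_
  rw [Pi.smul_apply, smul_eq_mul, Polynomial.map_mul, map_mul]; ring

lemma pairing_add (φ : F →+* F) (m : Fin ℓ → ℕ) (delta : Fin ℓ → F)
    (g g' v : Fin ℓ → F[X]) :
    pairing N φ m delta (g + g') v = pairing N φ m delta g v + pairing N φ m delta g' v := by
  rw [pairing, pairing, pairing, ← Finset.sum_add_distrib]
  refine Finset.sum_congr rfl fun i _ => ?_
  rw [Pi.add_apply, Polynomial.map_add, map_add]; ring

lemma pairing_eq_zero_of_span (φ : F →+* F) (m : Fin ℓ → ℕ) (delta : Fin ℓ → F)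
    {S : Set (Fin ℓ → F[X])} {v : Fin ℓ → F[X]} (h : ∀ g ∈ S, pairing N φ m delta g v = 0) :
    ∀ g ∈ Submodule.span F[X] S, pairing N φ m delta g v = 0 := by
  intro g hg
  induction hg using Submodule.span_induction with
  | mem x hx => exact h x hx
  | zero => simp [pairing]
  | add x y _ _ hx hy => rw [pairing_add, hx, hy, add_zero]
  | smul r x _ hx => rw [pairing_smul, hx, mul_zero]

lemma coeff_pairing_eq (hN : 0 < N) {φ : F →+* F} {m : Fin ℓ → ℕ} (hm : ∀ i, 0 < m i)
    {lam delta : Fin ℓ → F} (hdvd : ∀ i, m i ∣ N) (hpow : ∀ i, delta i ^ (N / m i) = 1)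
    (hld : ∀ i, φ (lam i) * delta i = 1) (g v : Fin ℓ → F[X]) :
    (pairing N φ m delta g v).coeff 0 =
      ∑ i, ∑ j, φ (toCode lam m g i j) * toCode delta m v i j := by
  rw [pairing, AddMonoidAlgebra.coeff_sum, Finsupp.finsetSum_apply]
  refine Finset.sum_congr rfl fun i _ => ?_
  rw [coeff_pairing (hm i) (Nat.div_pos (Nat.le_of_dvd hN (hdvd i)) (hm i))
    (Nat.mul_div_cancel' (hdvd i)).symm (hld i) (hpow i)]
  refine Finset.sum_congr rfl fun j _ => ?_
  have : (X ^ m i - C (φ (lam i)) : F[X]) = (X ^ m i - C (lam i)).map φ := by simp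
  rw [this, ← map_modByMonic φ (monic_X_pow_sub_C _ (hm i).ne'), coeff_map]
  rfl

/-- On a submodule, closed under multiplication of `g` by `X`, the vanishing of the constant
coefficient forces that of all coefficients: replacing `g` by `X ^ k • g` shifts them. -/
lemma forall_pairing_eq_zero_iff [NeZero N] (φ : F →+* F) (m : Fin ℓ → ℕ) (delta : Fin ℓ → F)
    (S : Submodule F[X] (Fin ℓ → F[X])) (v : Fin ℓ → F[X]) :
    (∀ g ∈ S, (pairing N φ m delta g v).coeff 0 = 0) ↔
      ∀ g ∈ S, pairing N φ m delta g v = 0 := by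
  refine ⟨fun h g hg => ?_, fun h g hg => by rw [h g hg]; rfl⟩
  ext z
  have hz := h _ (S.smul_mem (X ^ z.val) hg)
  rw [pairing_smul, Polynomial.map_pow, map_X, map_pow, aeval_X, single_one_pow,
    AddMonoidAlgebra.coeff_single_mul_apply] at hz
  simpa using hz

/-- When `deg gᵢ ≤ mᵢ` the pairing is the image of a polynomial built from reversals. -/
lemma pairing_row (φ : F →+* F) {m : Fin ℓ → ℕ} (hm : ∀ i, 0 < m i) {delta : Fin ℓ → F}
    (hdelta : ∀ i, delta i ≠ 0) (hdvd : ∀ i, m i ∣ N) (hpow : ∀ i, delta i ^ (N / m i) = 1)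
    {g : Fin ℓ → F[X]} (hg : ∀ i, (g i).natDegree ≤ m i) (v : Fin ℓ → F[X]) :
    pairing N φ m delta g v = evU F N (∑ i, (reflect (m i) (g i)).map φ *
      ((X ^ N - 1) / (X ^ m i - C (delta i))) * v i) := by
  rw [pairing, map_sum]
  refine Finset.sum_congr rfl fun i _ => ?_
  have h0 := evU_mul_blockKer (hm i) (Nat.mul_div_cancel' (hdvd i)).symm (hpow i)
  have h1 : blockKer F N (m i) (delta i) = (AddMonoidAlgebra.single (1 : ZMod N) (1 : F)) ^ m i *
      evU F N ((X ^ N - 1) / (X ^ m i - C (delta i))) := by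
    rw [blockKer, mul_smul_comm, smul_eq_zero_iff_right (hdelta i), map_sub, sub_mul, sub_eq_zero] at h0
    rw [blockKer]
    simp only [map_pow, aeval_X, aeval_C] at h0
    rw [h0, Algebra.smul_def]
  rw [h1, ← mul_assoc, evW_mul_pow _ _ ((natDegree_map_le).trans (hg i)), reflect_map, map_mul,
    map_mul]

end Dual

/-! ### The Galois dual and the matrix criterion -/

section Main

/-- Applying `σ ^ (e - κ)` to the defining equations moves the Frobenius twist from `v` to `c`. -/
lemma mem_galoisDualMT_iff {p e κ : ℕ} [Fact p.Prime] {F : Type*} [Field F] [Fintype F]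
    [CharP F p] (hcard : Fintype.card F = p ^ e) (hκ : κ < e) {ℓ : ℕ} {m : Fin ℓ → ℕ}
    (CC : Submodule F (∀ i, Fin (m i) → F)) (v : ∀ i, Fin (m i) → F) :
    v ∈ galoisDualMT p κ CC ↔ ∀ c ∈ CC, ∑ i, ∑ j, powFrob F p (e - κ) (c i j) * v i j = 0 := by
  refine forall₂_congr fun c _ => ?_
  rw [← map_eq_zero (powFrob F p (e - κ)), map_sum]
  simp only [map_sum, map_mul]
  have h : ∀ a : F, powFrob F p (e - κ) (a ^ p ^ κ) = a := fun a => by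
    change (a ^ p ^ κ) ^ p ^ (e - κ) = a
    rw [← pow_mul, ← pow_add, Nat.add_sub_cancel' hκ.le, ← hcard, FiniteField.pow_card]
  simp only [h]

lemma mem_span_rows_iff {R : Type*} [CommRing R] {ℓ : ℕ} (G : Matrix (Fin ℓ) (Fin ℓ) R)
    (q : Fin ℓ → R) :
    q ∈ Submodule.span R (Set.range fun i => G i) ↔ ∃ u, u ᵥ* G = q := by
  change q ∈ Submodule.span R (Set.range G.row) ↔ _
  rw [← range_vecMulLinear]; rfl

/-- `P * Q = c` with `c` scalar implies `Q * P = c` when the rows of `Q` are independent. -/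
lemma mul_eq_of_vecMul_injective {R : Type*} [CommRing R] {ℓ : ℕ}
    {P Q : Matrix (Fin ℓ) (Fin ℓ) R} {c : R} (hQ : Function.Injective fun v => v ᵥ* Q)
    (h : P * Q = c • (1 : Matrix (Fin ℓ) (Fin ℓ) R)) :
    Q * P = c • (1 : Matrix (Fin ℓ) (Fin ℓ) R) := by
  have h1 : (Q * P) * Q = (c • (1 : Matrix (Fin ℓ) (Fin ℓ) R)) * Q := by
    rw [Matrix.mul_assoc, h]; simp
  funext i
  apply hQ
  exact congrFun h1 i

lemma forall_span_dvd_dotProduct {R : Type*} [CommRing R] {ℓ : ℕ} {ι : Type*} (c : R)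
    (u : Fin ℓ → R) (rows : ι → Fin ℓ → R) :
    (∀ b ∈ Submodule.span R (Set.range rows), c ∣ b ⬝ᵥ u) ↔ ∀ i, c ∣ rows i ⬝ᵥ u := by
  refine ⟨fun h i => h _ (Submodule.subset_span ⟨i, rfl⟩), fun h b hb => ?_⟩
  induction hb using Submodule.span_induction with
  | mem x hx => obtain ⟨i, rfl⟩ := hx; exact h i
  | zero => simp
  | add x y _ _ hx hy => rw [add_dotProduct]; exact dvd_add hx hy
  | smul r x _ hx => rw [smul_dotProduct]; exact hx.mul_left r

/-- If `P * Q = Q * P = c` then the kernel of `Q` modulo `c` is the image of `P`. -/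
lemma forall_dvd_mulVec_iff {R : Type*} [CommRing R] [IsDomain R] {ℓ : ℕ}
    {P Q : Matrix (Fin ℓ) (Fin ℓ) R} {c : R} (hc : c ≠ 0)
    (hPQ : P * Q = c • (1 : Matrix (Fin ℓ) (Fin ℓ) R))
    (hQP : Q * P = c • (1 : Matrix (Fin ℓ) (Fin ℓ) R)) (u : Fin ℓ → R) :
    (∀ i, c ∣ Q i ⬝ᵥ u) ↔ ∃ w, u = P *ᵥ w := by
  constructor
  · intro h
    choose w hw using h
    refine ⟨w, ?_⟩
    have h1 : Q *ᵥ u = c • w := funext fun i => hw i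
    have h2 : c • u = c • (P *ᵥ w) := by
      rw [← mulVec_smul, ← h1, mulVec_mulVec, hPQ, smul_mulVec, one_mulVec]
    funext i
    exact mul_left_cancel₀ hc (congrFun h2 i)
  · rintro ⟨w, rfl⟩ i
    have h1 : Q *ᵥ (P *ᵥ w) = c • w := by rw [mulVec_mulVec, hQP, smul_mulVec, one_mulVec]
    exact ⟨w i, congrFun h1 i⟩

/-- A polynomial vector `v` represents an element of the `κ`-Galois dual of `C₁` exactly when the
matrix `σ^{e-κ}(G₁(1/x) diag(x^{mᵢ})) * diag((x^N - 1)/(x^{mᵢ} - δᵢ))` kills it modulo `X ^ N - 1`. -/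
lemma mem_dual_iff {p e κ : ℕ} [Fact p.Prime] {F : Type*} [Field F] [Fintype F]
    [CharP F p] (hcard : Fintype.card F = p ^ e) (hκ : κ < e) {ℓ : ℕ} {m : Fin ℓ → ℕ}
    (hm : ∀ i, 0 < m i) {lam delta : Fin ℓ → F} (hdelta : ∀ i, delta i ≠ 0)
    (hld : ∀ i, powFrob F p (e - κ) (lam i) * delta i = 1)
    {N : ℕ} (hN : 0 < N) (hdvd : ∀ i, m i ∣ N) (hpow : ∀ i, delta i ^ (N / m i) = 1)
    {C₁ : Submodule F (∀ i, Fin (m i) → F)} {G₁ : Matrix (Fin ℓ) (Fin ℓ) F[X]}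
    (hG₁ : IsGPM lam m C₁ G₁) (hdeg : ∀ i j, (G₁ i j).natDegree ≤ m j) (v : Fin ℓ → F[X]) :
    toCode delta m v ∈ galoisDualMT p κ C₁ ↔ ∀ i, (X ^ N - 1) ∣
      (((Matrix.of fun i j =>
          Polynomial.map (powFrob F p (e - κ)) (Polynomial.reflect (m j) (G₁ i j))) *
        Matrix.diagonal (fun i => (X ^ N - 1) / (X ^ (m i) - Polynomial.C (delta i)))) *ᵥ v) i := by
  have : NeZero N := ⟨hN.ne'⟩
  have hmem : ∀ g, g ∈ Submodule.span F[X] (Set.range fun i => G₁ i) ↔ toCode lam m g ∈ C₁ :=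
    fun g => by rw [← SetLike.mem_coe, hG₁.2]; rfl
  rw [mem_galoisDualMT_iff hcard hκ]
  trans ∀ g ∈ Submodule.span F[X] (Set.range fun i => G₁ i),
      (pairing N (powFrob F p (e - κ)) m delta g v).coeff 0 = 0
  · simp only [coeff_pairing_eq hN hm hdvd hpow hld, hmem]
    constructor
    · exact fun h g hg => h _ hg
    · intro h c hc
      obtain ⟨g, rfl⟩ := toCode_surjective lam hm c
      exact h g hc
  · rw [forall_pairing_eq_zero_iff]
    trans ∀ i, pairing N (powFrob F p (e - κ)) m delta (G₁ i) v = 0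
    · constructor
      · exact fun h i => h _ (Submodule.subset_span ⟨i, rfl⟩)
      · intro h
        refine pairing_eq_zero_of_span _ _ _ ?_
        rintro _ ⟨i, rfl⟩
        exact h i
    · refine forall_congr' fun i => ?_
      rw [pairing_row _ hm hdelta hdvd hpow (hdeg i), evU_eq_zero_iff hN]
      simp [mulVec, dotProduct, mul_diagonal]

end Main

/-- Let `q = p^e`, `0 ≤ κ < e`.  Let `C₁` be Λ-MT and `C₂` be Δ-MT with
the same block lengths, GPMs `G₁, G₂`, and `σ^{e-κ}(Λ⁻¹) = Δ`.  With
`N = lcm(tᵢ mᵢ)`, let `Q` be the quasi-cyclic code of index `ℓ` and co-index `N`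
generated by the rows of `[σ^{e-κ}(G₁(1/x)·diag(x^{mᵢ}))·diag((x^N-1)/(x^{mᵢ}-δᵢ))·G₂ᵀ ;
(x^N-1)·I_ℓ]`, let `Qm` be a GPM of `Q` and `P` satisfy `P·Qm = (x^N-1)·I_ℓ`.  Then
`C₁^{⊥κ} ∩ C₂` is a Δ-MT code with GPM `Pᵀ·G₂`. -/
theorem stmt12 {p e : ℕ} [Fact p.Prime] {F : Type*} [Field F] [Fintype F] [CharP F p]
    (hcard : Fintype.card F = p ^ e) {κ : ℕ} (hκ : κ < e)
    {ℓ : ℕ} {m : Fin ℓ → ℕ} (hm : ∀ i, 0 < m i)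
    {lam delta : Fin ℓ → F} (hlam : ∀ i, lam i ≠ 0) (hdelta : ∀ i, delta i ≠ 0)
    (hLD : ∀ i, delta i = ((lam i)⁻¹) ^ p ^ (e - κ))
    (C₁ C₂ : Submodule F (∀ i, Fin (m i) → F))
    (hC₁ : IsMT lam C₁) (hC₂ : IsMT delta C₂)
    (G₁ G₂ : Matrix (Fin ℓ) (Fin ℓ) (Polynomial F))
    (hG₁ : IsGPM lam m C₁ G₁) (hG₂ : IsGPM delta m C₂ G₂)
    (hdeg : ∀ i j, (G₁ i j).natDegree ≤ m j)
    {N : ℕ} (hN : N = Finset.univ.lcm (fun i => orderOf (lam i) * m i))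
    (Qm P : Matrix (Fin ℓ) (Fin ℓ) (Polynomial F))
    (hQ : IsGPM (fun _ => (1 : F)) (fun _ => N)
      (genCode (fun _ => (1 : F)) (fun _ => N)
        (fun r : Fin ℓ ⊕ Fin ℓ =>
          Matrix.fromRows
            ((Matrix.of fun i j =>
                Polynomial.map (powFrob F p (e - κ)) (Polynomial.reflect (m j) (G₁ i j))) *
              Matrix.diagonal (fun i => (X ^ N - 1) / (X ^ (m i) - Polynomial.C (delta i))) *
              G₂.transpose)
            ((X ^ N - 1 : Polynomial F) • (1 : Matrix (Fin ℓ) (Fin ℓ) (Polynomial F))) r))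
      Qm)
    (hPQ : P * Qm = Matrix.diagonal (fun _ => (X ^ N - 1 : Polynomial F))) :
    IsMT delta (galoisDualMT p κ C₁ ⊓ C₂) ∧
    IsGPM delta m (galoisDualMT p κ C₁ ⊓ C₂) (P.transpose * G₂) := by
  set φ := powFrob F p (e - κ) with hφ
  have hord : ∀ i, 0 < orderOf (lam i) := fun i =>
    orderOf_pos_iff.2 (isOfFinOrder_iff_pow_eq_one.2
      ⟨Fintype.card F - 1, Nat.sub_pos_of_lt Fintype.one_lt_card,
        FiniteField.pow_card_sub_one_eq_one _ (hlam i)⟩)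
  have hNpos : 0 < N := by
    rw [hN, Nat.pos_iff_ne_zero, Ne, Finset.lcm_eq_zero_iff]
    rintro ⟨i, -, hi⟩
    exact (Nat.mul_pos (hord i) (hm i)).ne' hi
  have htm : ∀ i, orderOf (lam i) * m i ∣ N := fun i => by
    rw [hN]; exact Finset.dvd_lcm (f := fun i => orderOf (lam i) * m i) (Finset.mem_univ i)
  have hdvd : ∀ i, m i ∣ N := fun i => (Dvd.intro_left _ rfl).trans (htm i)
  have hpow : ∀ i, delta i ^ (N / m i) = 1 := fun i => by
    have h1 : lam i ^ (N / m i) = 1 :=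
      orderOf_dvd_iff_pow_eq_one.1 (Nat.dvd_div_of_mul_dvd (by rw [mul_comm]; exact htm i))
    rw [hLD, ← pow_mul, mul_comm, pow_mul, inv_pow, h1, inv_one, one_pow]
  have hld : ∀ i, φ (lam i) * delta i = 1 := fun i => by
    rw [hLD]
    change lam i ^ p ^ (e - κ) * _ = 1
    rw [← mul_pow, mul_inv_cancel₀ (hlam i), one_pow]
  have hc : (X ^ N - 1 : F[X]) ≠ 0 := X_pow_sub_C_ne_zero hNpos 1
  set A : Matrix (Fin ℓ) (Fin ℓ) F[X] := (Matrix.of fun i j =>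
      Polynomial.map φ (Polynomial.reflect (m j) (G₁ i j))) *
    Matrix.diagonal (fun i => (X ^ N - 1) / (X ^ (m i) - Polynomial.C (delta i))) with hA
  have hdual : ∀ v, toCode delta m v ∈ galoisDualMT p κ C₁ ↔ ∀ i, (X ^ N - 1) ∣ (A *ᵥ v) i :=
    mem_dual_iff hcard hκ hm hdelta hld hNpos hdvd hpow hG₁ hdeg
  have hQinj : Function.Injective fun v => v ᵥ* Qm := vecMul_injective_iff.2 hQ.1
  have hG₂inj : Function.Injective fun v => v ᵥ* G₂ := vecMul_injective_iff.2 hG₂.1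
  have hPQ' : P * Qm = (X ^ N - 1 : F[X]) • (1 : Matrix (Fin ℓ) (Fin ℓ) F[X]) := by
    rw [hPQ, smul_one_eq_diagonal]
  have hQP := mul_eq_of_vecMul_injective hQinj hPQ'
  have hspan : ∀ b, b ∈ Submodule.span F[X] (Set.range fun i => Qm i) ↔
      b ∈ Submodule.span F[X] (Set.range fun r : Fin ℓ ⊕ Fin ℓ => Matrix.fromRows (A * G₂.transpose)
        ((X ^ N - 1 : F[X]) • (1 : Matrix (Fin ℓ) (Fin ℓ) F[X])) r) := fun b => by
    rw [← SetLike.mem_coe, hQ.2]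
    refine mem_genCode_iff (lam := fun _ => (1 : F)) (m := fun _ => N) (fun _ => hNpos)
      (fun i => Submodule.subset_span ⟨Sum.inr i, ?_⟩) b
    ext1 j
    simp [Matrix.one_apply, Pi.single_apply, eq_comm]
  -- The coordinate vectors `u`, relative to the rows of `G₂`, of codewords of `C₂` lying in the
  -- dual: being killed modulo `X ^ N - 1` by `A * G₂ᵀ` is the same as being killed by `Qm`.
  have hker : ∀ u : Fin ℓ → F[X],
      (∀ i, (X ^ N - 1) ∣ (A *ᵥ (u ᵥ* G₂)) i) ↔ ∃ w, u = P *ᵥ w := fun u => by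
    rw [← forall_dvd_mulVec_iff hc hPQ' hQP, ← forall_span_dvd_dotProduct _ u (fun i => Qm i)]
    simp only [hspan]
    rw [forall_span_dvd_dotProduct, Sum.forall, ← mulVec_transpose, mulVec_mulVec]
    refine ⟨fun h => ⟨h, fun i => ?_⟩, fun h => h.1⟩
    change _ ∣ (((X ^ N - 1 : F[X]) • (1 : Matrix (Fin ℓ) (Fin ℓ) F[X])) *ᵥ u) i
    rw [smul_mulVec, one_mulVec]
    exact Dvd.intro _ rfl
  have hgpm : IsGPM delta m (galoisDualMT p κ C₁ ⊓ C₂) (P.transpose * G₂) := by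
    constructor
    · refine vecMul_injective_iff.1 fun u u' h => ?_
      simp only [← vecMul_vecMul, vecMul_transpose] at h
      have h1 : Qm *ᵥ (P *ᵥ u) = Qm *ᵥ (P *ᵥ u') := congrArg _ (hG₂inj h)
      rw [mulVec_mulVec, mulVec_mulVec, hQP, smul_mulVec, smul_mulVec, one_mulVec,
        one_mulVec] at h1
      funext i
      exact mul_left_cancel₀ hc (congrFun h1 i)
    · ext v
      have h2 : toCode delta m v ∈ C₂ ↔ ∃ u, u ᵥ* G₂ = v := by
        rw [← mem_span_rows_iff, ← SetLike.mem_coe, ← SetLike.mem_coe, hG₂.2]; rfl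
      change v ∈ Submodule.span F[X] _ ↔
        toCode delta m v ∈ galoisDualMT p κ C₁ ∧ toCode delta m v ∈ C₂
      rw [mem_span_rows_iff, hdual, h2]
      constructor
      · rintro ⟨w, rfl⟩
        rw [← vecMul_vecMul, vecMul_transpose]
        exact ⟨(hker _).2 ⟨w, rfl⟩, _, rfl⟩
      · rintro ⟨h, u, rfl⟩
        obtain ⟨w, rfl⟩ := (hker u).1 h
        exact ⟨w, by rw [← vecMul_vecMul, vecMul_transpose]⟩
  exact ⟨isMT_of_isGPM hm hgpm, hgpm⟩
end

section
/- Let C_1 and C_2 be Λ-MT codes over F_q with index ℓ, block lengths (m_1,…,m_ℓ), GPMs G_1, G_2 and identical-equation matrices A_1, A_2. Let N = lcm(t_1 m_1,…,t_ℓ m_ℓ), let Q be the QC code of index ℓ and co-index N generated by the rows of [A_1^T·diag((x^N−1)/(x^{m_i}−λ_i))·G_2^T ; (x^N−1)·I_ℓ], let Q be a GPM of Q with P·Q = (x^N−1)·I_ℓ. Then the following are equivalent: (1) C_1 ∩ C_2 = {0}; (2) the columns of A_1 and A_2 together generate the full module (F_q[x])^ℓ; (3) diag((x^N−1)/(x^{m_i}−λ_i))·G_2^T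 is a GPM of Q; (4) there exists a polynomial matrix U, invertible over F_q[x], such that P·U = A_2^T; (5) dim(Q) = dim(C_2). -/
/-!
Write `R = F[x]`, `h = x^N - 1`, `D = diag(x^{mᵢ} - λᵢ)`, `E = diag(h / (x^{mᵢ} - λᵢ))`,
`H = E G₂ᵀ`, and let `K` be `A₁ᵀ` stacked on top of `A₂ᵀ`. From `A₂ G₂ = D` one gets
`A₂ᵀ H = h I`, so the matrix whose rows generate the quasi-cyclic code is exactly `K H`. Its row
span contains `h R^ℓ`, hence is the full `R`-module of the code (`toCode_mem_genCode`), and it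
equals the row span of `Qm`. Since `H` is nonsingular, `Qm = B H`, where the square nonsingular
matrix `B` has the same row span as `K`. Moreover `P B H = h I = A₂ᵀ H` gives `P B = A₂ᵀ`.

Every one of the five conditions says that `B` is invertible over `R`:

* (2) says that the row span of `K`, i.e. of `B`, is `R^ℓ`.
* (3) says that `H` and `Qm = B H` have the same row span.
* (4): a solution `U` of `P U = A₂ᵀ` is unique, so it is `B`.
* (5): a code with GPM `G` and identical equation `A G = D` has dimension `deg det A`
  (`finrank_eq_natDegree`, which rests on the Smith normal form through
  `finrank_quotient_rowSpan`). The two dimensions are thus `deg det P` and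
  `deg det A₂ = deg det P + deg det B`.
* (1): by `inf_eq_bot_iff` the condition is that the row spans of `G₁` and `G₂` meet only in
  `R^ℓ D`. Write `A₁ᵀ = W B` and `A₂ᵀ = P B`. Cancelling `Bᵀ` in `A₁ G₁ = D = A₂ G₂` yields
  `Wᵀ G₁ = Pᵀ G₂`, whose rows lie in both row spans; if they are multiples `Z D`, then
  `Bᵀ Z = I`. Conversely, if `B` is invertible there is a Bézout identity
  `A₁ Y₁ + A₂ Y₂ = I`, and for `q = a G₁ = b G₂` it gives `q = (a Y₁ + b Y₂) D`.
-/


open Polynomial Matrix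

/-! ### Matrices over `F[x]` and row spans -/

theorem matrix_mul_left_cancel {F : Type*} [Field F] {ℓ : ℕ}
    {A B C : Matrix (Fin ℓ) (Fin ℓ) F[X]} (hA : A.det ≠ 0) (h : A * B = A * C) : B = C := by
  have h2 : A.adjugate * (A * B) = A.adjugate * (A * C) := by rw [h]
  rw [← Matrix.mul_assoc, ← Matrix.mul_assoc, Matrix.adjugate_mul, Matrix.smul_mul,
    Matrix.smul_mul, Matrix.one_mul, Matrix.one_mul] at h2
  exact smul_right_injective _ hA h2

theorem matrix_mul_right_cancel {F : Type*} [Field F] {ℓ : ℕ} {ν : Type*}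
    {A : Matrix (Fin ℓ) (Fin ℓ) F[X]} {B C : Matrix ν (Fin ℓ) F[X]} (hA : A.det ≠ 0)
    (h : B * A = C * A) : B = C := by
  have h2 : B * A * A.adjugate = C * A * A.adjugate := by rw [h]
  rw [Matrix.mul_assoc, Matrix.mul_assoc, Matrix.mul_adjugate, Matrix.mul_smul,
    Matrix.mul_smul, Matrix.mul_one, Matrix.mul_one] at h2
  ext1 i j
  exact mul_left_cancel₀ hA (congrFun (congrFun h2 i) j)

theorem mem_rowSpan {R : Type*} [CommRing R] {ι κ : Type*} [Fintype ι] (A : Matrix ι κ R)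
    (v : κ → R) :
    v ∈ Submodule.span R (Set.range (fun i => A i)) ↔ ∃ a : ι → R, a ᵥ* A = v := by
  have h := SetLike.ext_iff.1 (range_vecMulLinear A) v
  rw [LinearMap.mem_range] at h
  exact h.symm

/-- If every row of `B` is in the row span of `A`, then `B` factors through `A`. -/
theorem exists_mul_of_rows_mem {R : Type*} [CommRing R] {ι κ ν : Type*} [Fintype ι]
    (A : Matrix ι κ R) (B : Matrix ν κ R)
    (h : ∀ i, B i ∈ Submodule.span R (Set.range (fun i => A i))) :
    ∃ W : Matrix ν ι R, B = W * A := by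
  choose W hW using fun i => (mem_rowSpan A (B i)).1 (h i)
  exact ⟨Matrix.of W, by ext i j; rw [← hW i]; rfl⟩

theorem mul_row_mem {R : Type*} [CommRing R] {ι κ ν : Type*} [Fintype ι]
    (W : Matrix ν ι R) (A : Matrix ι κ R) (i : ν) :
    (W * A) i ∈ Submodule.span R (Set.range (fun i => A i)) :=
  (mem_rowSpan A _).2 ⟨W i, by ext j; rfl⟩

/-! ### Dimension of the cokernel of a polynomial matrix -/

/-- `dim_F F[x]^ℓ / (row span of A) = deg det A`: pass to the Smith normal form, whose diagonal
entries multiply to an associate of `det A`. -/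
theorem finrank_quotient_rowSpan {F : Type*} [Field F] {ℓ : ℕ}
    (A : Matrix (Fin ℓ) (Fin ℓ) F[X]) (hA : A.det ≠ 0) :
    Module.finrank F ((Fin ℓ → F[X]) ⧸ LinearMap.range (Matrix.toLin' Aᵀ)) =
      A.det.natDegree := by
  set f := Matrix.toLin' Aᵀ with hf
  have hdet : LinearMap.det f = A.det := by rw [hf, LinearMap.det_toLin', Matrix.det_transpose]
  have hinj : Function.Injective f := by
    rw [← LinearMap.ker_eq_bot]
    by_contra hne
    exact hA (hdet ▸ LinearMap.det_eq_zero_iff_ker_ne_bot.2 hne)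
  set b := Pi.basisFun F[X] (Fin ℓ)
  set N := LinearMap.range f
  let eN : (Fin ℓ → F[X]) ≃ₗ[F[X]] N := LinearEquiv.ofInjective f hinj
  have h : Module.finrank F[X] N = Module.finrank F[X] (Fin ℓ → F[X]) := eN.finrank_eq.symm
  have hne := Submodule.smithNormalFormCoeffs_ne_zero b h
  let b' := Submodule.smithNormalFormTopBasis b h
  let e := (b'.equiv (Submodule.smithNormalFormBotBasis b h) (Equiv.refl _)).trans eN.symm
  have hassoc : Associated A.det (∏ i, Submodule.smithNormalFormCoeffs b h i) := by
    rw [← hdet, ← Matrix.det_diagonal, ← LinearMap.det_toLin b']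
    refine (LinearMap.associated_det_of_eq_comp e _ _ ?_).symm
    have hE : Matrix.toLin b' b' (Matrix.diagonal (Submodule.smithNormalFormCoeffs b h)) =
        f ∘ₗ (e : (Fin ℓ → F[X]) →ₗ[F[X]] _) := by
      refine b'.ext fun i => ?_
      have h1 : f (eN.symm (Submodule.smithNormalFormBotBasis b h i)) =
          (Submodule.smithNormalFormBotBasis b h i : Fin ℓ → F[X]) :=
        congrArg Subtype.val (eN.apply_symm_apply (Submodule.smithNormalFormBotBasis b h i))
      have h2 : f (e (b' i)) = (Submodule.smithNormalFormBotBasis b h i : Fin ℓ → F[X]) := by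
        simp only [e, LinearEquiv.trans_apply, Module.Basis.equiv_apply, Equiv.refl_apply]
        exact h1
      rw [LinearMap.comp_apply, LinearEquiv.coe_coe, h2, Submodule.smithNormalFormBotBasis_def]
      simp [Matrix.toLin_self, Matrix.diagonal_apply, b']
    intro x
    exact congrArg (fun g => g x) hE
  rw [natDegree_eq_of_degree_eq (degree_eq_degree_of_associated hassoc),
    natDegree_prod _ _ fun i _ => hne i]
  have hfin : ∀ i, Module.Finite F
      (F[X] ⧸ Ideal.span ({Submodule.smithNormalFormCoeffs b h i} : Set F[X])) := fun i =>
    PowerBasis.finite <| AdjoinRoot.powerBasis <| hne i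
  rw [Submodule.finrank_quotient_eq_sum F b h]
  congr with i
  exact (AdjoinRoot.powerBasis <| hne i).finrank

/-! ### The map `toCode` and generator polynomial matrices -/

/-- `toCode` as an `F`-linear map. -/
noncomputable def toCodeLin {F : Type*} [Field F] {ℓ : ℕ} (lam : Fin ℓ → F) (m : Fin ℓ → ℕ) :
    (Fin ℓ → F[X]) →ₗ[F] ∀ i, Fin (m i) → F where
  toFun := toCode lam m
  map_add' p q := by
    ext i j
    simp [toCode, Polynomial.add_modByMonic]
  map_smul' c p := by
    ext i j
    simp [toCode, Polynomial.smul_modByMonic]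

/-- The kernel of `toCode` is the row span of `diag(x^{mᵢ} - λᵢ)`. -/
theorem toCodeLin_eq_zero {F : Type*} [Field F] {ℓ : ℕ} {lam : Fin ℓ → F} {m : Fin ℓ → ℕ}
    (hm : ∀ i, 0 < m i) (q : Fin ℓ → F[X]) :
    toCodeLin lam m q = 0 ↔
      ∃ c, c ᵥ* Matrix.diagonal (fun i => X ^ (m i) - Polynomial.C (lam i)) = q := by
  constructor
  · intro h
    have hd : ∀ i, (X ^ (m i) - Polynomial.C (lam i)) ∣ q i := by
      intro i
      have hmon := Polynomial.monic_X_pow_sub_C (lam i) (hm i).ne'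
      rw [← Polynomial.modByMonic_eq_zero_iff_dvd hmon]
      ext j
      by_cases hj : j < m i
      · exact congrFun (congrFun h i) ⟨j, hj⟩
      · refine Polynomial.coeff_eq_zero_of_degree_lt ?_
        refine (Polynomial.degree_modByMonic_lt _ hmon).trans_le ?_
        rw [Polynomial.degree_X_pow_sub_C (hm i)]
        exact_mod_cast not_lt.1 hj
    choose c hc using hd
    exact ⟨c, by ext1 i; rw [Matrix.vecMul_diagonal, hc i, mul_comm]⟩
  · rintro ⟨c, rfl⟩
    ext i j
    change ((_ : F[X]) %ₘ _).coeff _ = _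
    rw [Matrix.vecMul_diagonal, (Polynomial.modByMonic_eq_zero_iff_dvd
      (Polynomial.monic_X_pow_sub_C (lam i) (hm i).ne')).2 (dvd_mul_left _ _)]
    simp

theorem toCodeLin_surjective {F : Type*} [Field F] {ℓ : ℕ} {lam : Fin ℓ → F} {m : Fin ℓ → ℕ}
    (hm : ∀ i, 0 < m i) : Function.Surjective (toCodeLin lam m) := by
  classical
  intro v
  refine ⟨fun i => Polynomial.ofFn (m i) (v i), ?_⟩
  ext i j
  change ((_ : F[X]) %ₘ _).coeff _ = _
  rw [(Polynomial.modByMonic_eq_self_iff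
    (Polynomial.monic_X_pow_sub_C (lam i) (hm i).ne')).2]
  · simp [Polynomial.ofFn_coeff_eq_val_of_lt (v i) j.2]
  · rw [Polynomial.degree_X_pow_sub_C (hm i)]
    exact Polynomial.ofFn_degree_lt (v i)

/-- A code with GPM `G` and identical equation `A * G = diag(x^{mᵢ} - λᵢ)` is isomorphic, through
`a ↦ toCode (a G)`, to `F[x]^ℓ` modulo the rows of `A`. -/
theorem finrank_eq_natDegree {F : Type*} [Field F] {ℓ : ℕ} {lam : Fin ℓ → F} {m : Fin ℓ → ℕ}
    (hm : ∀ i, 0 < m i) (CC : Submodule F (∀ i, Fin (m i) → F))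
    (G A : Matrix (Fin ℓ) (Fin ℓ) F[X]) (hG : IsGPM lam m CC G)
    (hA : A * G = Matrix.diagonal (fun i => X ^ (m i) - Polynomial.C (lam i)))
    (hAd : A.det ≠ 0) (hGd : G.det ≠ 0) :
    Module.finrank F CC = A.det.natDegree := by
  rw [← finrank_quotient_rowSpan A hAd]
  let φ := toCodeLin lam m ∘ₗ (Matrix.toLin' Gᵀ).restrictScalars F
  have hφ : ∀ a, φ a = toCodeLin lam m (a ᵥ* G) := fun a => by simp [φ, Matrix.mulVec_transpose]
  have hrange : LinearMap.range φ = CC := by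
    ext v
    constructor
    · rintro ⟨a, rfl⟩
      have : a ᵥ* G ∈ (Submodule.span F[X] (Set.range (fun i => G i)) : Set (Fin ℓ → F[X])) :=
        (mem_rowSpan G _).2 ⟨a, rfl⟩
      rw [hG.2] at this
      rw [hφ]
      exact this
    · intro hv
      obtain ⟨q, rfl⟩ := toCodeLin_surjective (lam := lam) hm v
      have : q ∈ (Submodule.span F[X] (Set.range (fun i => G i)) : Set (Fin ℓ → F[X])) := by
        rw [hG.2]; exact hv
      obtain ⟨a, rfl⟩ := (mem_rowSpan G _).1 this
      exact ⟨a, hφ a⟩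
  have hker : LinearMap.ker φ = (LinearMap.range (Matrix.toLin' Aᵀ)).restrictScalars F := by
    ext a
    rw [LinearMap.mem_ker, hφ, toCodeLin_eq_zero hm, Submodule.restrictScalars_mem,
      LinearMap.mem_range]
    simp only [Matrix.toLin'_apply, Matrix.mulVec_transpose]
    refine exists_congr fun c => ?_
    rw [← hA, ← Matrix.vecMul_vecMul]
    refine ⟨fun h => ?_, fun h => by rw [h]⟩
    rw [← sub_eq_zero, ← Matrix.sub_vecMul] at h
    exact sub_eq_zero.1 (Matrix.eq_zero_of_vecMul_eq_zero hGd h)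
  rw [← hrange, ← φ.quotKerEquivRange.finrank_eq, hker]
  exact (Submodule.Quotient.restrictScalarsEquiv F _).finrank_eq

/-- If the span of `rows` contains the kernel of `toCode`, it is exactly the `F[x]`-module of the
code generated by `rows`. -/
theorem toCode_mem_genCode {F : Type*} [Field F] {ℓ : ℕ} {lam : Fin ℓ → F} {m : Fin ℓ → ℕ}
    (hm : ∀ i, 0 < m i) {ι : Type*} (rows : ι → (Fin ℓ → F[X]))
    (hD : ∀ i, Matrix.diagonal (fun i => X ^ (m i) - Polynomial.C (lam i)) i ∈
      Submodule.span F[X] (Set.range rows)) :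
    {q | toCode lam m q ∈ genCode lam m rows} =
      (Submodule.span F[X] (Set.range rows) : Set (Fin ℓ → F[X])) := by
  have hmap : genCode lam m rows = Submodule.map (toCodeLin lam m)
      ((Submodule.span F[X] (Set.range rows)).restrictScalars F) := by
    apply Submodule.span_eq_of_le
    · exact fun v hv => hv
    · exact fun v hv => Submodule.subset_span hv
  ext q
  rw [Set.mem_ofPred_eq, hmap]
  constructor
  · rintro ⟨s, hs, hsq⟩
    have h0 : toCodeLin lam m (q - s) = 0 := by
      rw [map_sub, sub_eq_zero]; exact hsq.symm
    obtain ⟨c, hc⟩ := (toCodeLin_eq_zero hm _).1 h0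
    have h1 : q - s ∈ Submodule.span F[X] (Set.range rows) := by
      have := (mem_rowSpan (Matrix.diagonal fun i => X ^ (m i) - Polynomial.C (lam i)) (q - s)).2
        ⟨c, hc⟩
      refine (Submodule.span_le.2 ?_) this
      rintro _ ⟨i, rfl⟩
      exact hD i
    simpa using Submodule.add_mem _ h1 hs
  · exact fun hq => ⟨q, hq, rfl⟩

/-- The codes meet trivially iff every polynomial vector lying in both
row spans is a multiple of `diag(x^{mᵢ} - λᵢ)`. -/
theorem inf_eq_bot_iff {F : Type*} [Field F] {ℓ : ℕ} {lam : Fin ℓ → F} {m : Fin ℓ → ℕ}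
    (hm : ∀ i, 0 < m i) {C₁ C₂ : Submodule F (∀ i, Fin (m i) → F)}
    {G₁ G₂ : Matrix (Fin ℓ) (Fin ℓ) F[X]}
    (hG₁ : IsGPM lam m C₁ G₁) (hG₂ : IsGPM lam m C₂ G₂) :
    C₁ ⊓ C₂ = ⊥ ↔ ∀ a b : Fin ℓ → F[X], a ᵥ* G₁ = b ᵥ* G₂ →
      ∃ c, c ᵥ* Matrix.diagonal (fun i => X ^ (m i) - Polynomial.C (lam i)) = a ᵥ* G₁ := by
  have hmem : ∀ {CC : Submodule F (∀ i, Fin (m i) → F)} {G : Matrix (Fin ℓ) (Fin ℓ) F[X]},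
      IsGPM lam m CC G → ∀ q, toCodeLin lam m q ∈ CC ↔ ∃ a, a ᵥ* G = q := by
    intro CC G hG q
    exact (Set.ext_iff.1 hG.2 q).symm.trans (mem_rowSpan G q)
  constructor
  · intro h a b hab
    rw [← toCodeLin_eq_zero hm, ← Submodule.mem_bot (R := F), ← h]
    exact ⟨(hmem hG₁ _).2 ⟨a, rfl⟩, (hmem hG₂ _).2 ⟨b, hab.symm⟩⟩
  · intro h
    rw [eq_bot_iff]
    rintro v ⟨hv1, hv2⟩
    obtain ⟨q, rfl⟩ := toCodeLin_surjective (lam := lam) hm v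
    obtain ⟨a, rfl⟩ := (hmem hG₁ _).1 hv1
    obtain ⟨b, hb⟩ := (hmem hG₂ _).1 hv2
    exact (toCodeLin_eq_zero hm _).2 (h a b hb.symm)

/-- Substitute `x^k` and `l` in `a - b ∣ a^s - b^s`, with `s` a multiple of the order of `l`. -/
theorem X_pow_sub_C_dvd {F : Type*} [Field F] (l : F) (k N : ℕ) (h : orderOf l * k ∣ N) :
    (X ^ k - Polynomial.C l : F[X]) ∣ X ^ N - 1 := by
  obtain ⟨r, rfl⟩ := h
  have := sub_dvd_pow_sub_pow (X ^ k : F[X]) (Polynomial.C l) (orderOf l * r)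
  rw [← Polynomial.C_pow, pow_mul l, pow_orderOf_eq_one, one_pow, Polynomial.C_1,
    ← pow_mul] at this
  convert this using 3
  ring

/-! ### The equivalence -/

/-- Let `C₁, C₂` be Λ-MT codes with GPMs `G₁, G₂` and identical-equation
matrices `A₁, A₂`, `N = lcm(tᵢ mᵢ)`, `Q` the quasi-cyclic code generated by the rows of
`[A₁ᵀ·diag((x^N-1)/(x^{mᵢ}-λᵢ))·G₂ᵀ ; (x^N-1)·I_ℓ]`, `Qm` a GPM of `Q` and
`P·Qm = (x^N-1)·I_ℓ`.  Then the following are equivalent: (1) `C₁ ∩ C₂ = {0}`;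
(2) the columns of `A₁` and `A₂` generate `(F[x])^ℓ`;
(3) `diag((x^N-1)/(x^{mᵢ}-λᵢ))·G₂ᵀ` is a GPM of `Q`;
(4) `P·U = A₂ᵀ` for some invertible polynomial matrix `U`; (5) `dim Q = dim C₂`. -/
theorem stmt14 {F : Type*} [Field F] [Fintype F] {ℓ : ℕ} {m : Fin ℓ → ℕ}
    (hm : ∀ i, 0 < m i) {lam : Fin ℓ → F} (hlam : ∀ i, lam i ≠ 0)
    (C₁ C₂ : Submodule F (∀ i, Fin (m i) → F))
    (hC₁ : IsMT lam C₁) (hC₂ : IsMT lam C₂)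
    (G₁ G₂ A₁ A₂ : Matrix (Fin ℓ) (Fin ℓ) (Polynomial F))
    (hG₁ : IsGPM lam m C₁ G₁) (hG₂ : IsGPM lam m C₂ G₂)
    (hA₁ : A₁ * G₁ = Matrix.diagonal (fun i => X ^ (m i) - Polynomial.C (lam i)))
    (hA₂ : A₂ * G₂ = Matrix.diagonal (fun i => X ^ (m i) - Polynomial.C (lam i)))
    {N : ℕ} (hN : N = Finset.univ.lcm (fun i => orderOf (lam i) * m i))
    (Qm P : Matrix (Fin ℓ) (Fin ℓ) (Polynomial F))
    (hQ : IsGPM (fun _ => (1 : F)) (fun _ => N)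
      (genCode (fun _ => (1 : F)) (fun _ => N)
        (fun r : Fin ℓ ⊕ Fin ℓ =>
          Matrix.fromRows
            (A₁.transpose *
              Matrix.diagonal (fun i => (X ^ N - 1) / (X ^ (m i) - Polynomial.C (lam i))) *
              G₂.transpose)
            ((X ^ N - 1 : Polynomial F) • (1 : Matrix (Fin ℓ) (Fin ℓ) (Polynomial F))) r))
      Qm)
    (hPQ : P * Qm = Matrix.diagonal (fun _ => (X ^ N - 1 : Polynomial F))) :
    List.TFAE [
      C₁ ⊓ C₂ = ⊥,
      Submodule.span (Polynomial F)
        (Set.range (fun j => A₁.transpose j) ∪ Set.range (fun j => A₂.transpose j)) = ⊤,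
      IsGPM (fun _ => (1 : F)) (fun _ => N)
        (genCode (fun _ => (1 : F)) (fun _ => N)
          (fun r : Fin ℓ ⊕ Fin ℓ =>
            Matrix.fromRows
              (A₁.transpose *
                Matrix.diagonal (fun i => (X ^ N - 1) / (X ^ (m i) - Polynomial.C (lam i))) *
                G₂.transpose)
              ((X ^ N - 1 : Polynomial F) • (1 : Matrix (Fin ℓ) (Fin ℓ) (Polynomial F))) r))
        (Matrix.diagonal (fun i => (X ^ N - 1) / (X ^ (m i) - Polynomial.C (lam i))) *
          G₂.transpose),
      ∃ U : Matrix (Fin ℓ) (Fin ℓ) (Polynomial F), IsUnit U ∧ P * U = A₂.transpose,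
      Module.finrank F
        (genCode (fun _ => (1 : F)) (fun _ => N)
          (fun r : Fin ℓ ⊕ Fin ℓ =>
            Matrix.fromRows
              (A₁.transpose *
                Matrix.diagonal (fun i => (X ^ N - 1) / (X ^ (m i) - Polynomial.C (lam i))) *
                G₂.transpose)
              ((X ^ N - 1 : Polynomial F) • (1 : Matrix (Fin ℓ) (Fin ℓ) (Polynomial F))) r))
        = Module.finrank F C₂ ] := by
  classical
  -- `N > 0`, so that `x^N - 1 ≠ 0` and the facts on `toCode` apply to the quasi-cyclic code.
  have hN0 : 0 < N := by
    rw [hN]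
    refine Nat.pos_of_ne_zero fun h0 => ?_
    obtain ⟨i, -, hi⟩ := Finset.lcm_eq_zero_iff.1 h0
    have : 0 < orderOf (lam i) := by
      have := orderOf_pos (Units.mk0 (lam i) (hlam i))
      rwa [← orderOf_units] at this
    exact (Nat.mul_pos this (hm i)).ne' hi
  have hdvd : ∀ i, (X ^ (m i) - Polynomial.C (lam i) : F[X]) ∣ X ^ N - 1 := fun i =>
    X_pow_sub_C_dvd _ _ _ (hN ▸ Finset.dvd_lcm (Finset.mem_univ i))
  have hNm : ∀ _ : Fin ℓ, 0 < N := fun _ => hN0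
  have hd0 : ∀ i, (X ^ (m i) - Polynomial.C (lam i) : F[X]) ≠ 0 := fun i =>
    (Polynomial.monic_X_pow_sub_C (lam i) (hm i).ne').ne_zero
  have hh0 : (X ^ N - 1 : F[X]) ≠ 0 := by
    simpa using (Polynomial.monic_X_pow_sub_C (1 : F) hN0.ne').ne_zero
  have hdiagN : Matrix.diagonal (fun _ : Fin ℓ => (X ^ N - Polynomial.C (1 : F))) =
      (X ^ N - 1 : F[X]) • (1 : Matrix (Fin ℓ) (Fin ℓ) F[X]) := by
    rw [Polynomial.C_1, Matrix.smul_one_eq_diagonal]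
  have hPQ' : P * Qm = (X ^ N - 1 : F[X]) • (1 : Matrix (Fin ℓ) (Fin ℓ) F[X]) := by
    rw [hPQ, Matrix.smul_one_eq_diagonal]
  set h : F[X] := X ^ N - 1 with hh
  set E : Matrix (Fin ℓ) (Fin ℓ) F[X] :=
    Matrix.diagonal (fun i => h / (X ^ (m i) - Polynomial.C (lam i))) with hE
  set D : Matrix (Fin ℓ) (Fin ℓ) F[X] :=
    Matrix.diagonal (fun i => X ^ (m i) - Polynomial.C (lam i)) with hD
  have hED : E * D = h • (1 : Matrix (Fin ℓ) (Fin ℓ) F[X]) := by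
    rw [hE, hD, Matrix.diagonal_mul_diagonal, Matrix.smul_one_eq_diagonal]
    congr 1
    funext i
    rw [mul_comm]
    exact EuclideanDomain.mul_div_cancel' (hd0 i) (hdvd i)
  have hDE : D * E = h • (1 : Matrix (Fin ℓ) (Fin ℓ) F[X]) := by
    rw [← hED, hE, hD, Matrix.diagonal_mul_diagonal, Matrix.diagonal_mul_diagonal]
    simp only [mul_comm]
  have hdeth : (h • (1 : Matrix (Fin ℓ) (Fin ℓ) F[X])).det ≠ 0 := by
    rw [Matrix.det_smul, Matrix.det_one, mul_one]
    exact pow_ne_zero _ hh0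
  have hdetE : E.det ≠ 0 := by
    rw [← hED, Matrix.det_mul] at hdeth
    exact left_ne_zero_of_mul hdeth
  have hdetD : D.det ≠ 0 := by
    rw [← hED, Matrix.det_mul] at hdeth
    exact right_ne_zero_of_mul hdeth
  have hdetA₁ : A₁.det ≠ 0 := by
    rw [← hA₁, Matrix.det_mul] at hdetD
    exact left_ne_zero_of_mul hdetD
  have hdetA₂ : A₂.det ≠ 0 := by
    rw [← hA₂, Matrix.det_mul] at hdetD
    exact left_ne_zero_of_mul hdetD
  have hdetG₂ : G₂.det ≠ 0 := by
    rw [← hA₂, Matrix.det_mul] at hdetD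
    exact right_ne_zero_of_mul hdetD
  have hdetP : P.det ≠ 0 := by
    rw [← hPQ', Matrix.det_mul] at hdeth
    exact left_ne_zero_of_mul hdeth
  have hdetQ : Qm.det ≠ 0 := by
    rw [← hPQ', Matrix.det_mul] at hdeth
    exact right_ne_zero_of_mul hdeth
  -- Since `D⁻¹ = E / h`, the identity `A G = D` says `G⁻¹ = E A / h`; this avoids fractions.
  have hGEA : ∀ A G : Matrix (Fin ℓ) (Fin ℓ) F[X], A * G = D → A.det ≠ 0 →
      G * E * A = h • (1 : Matrix (Fin ℓ) (Fin ℓ) F[X]) := by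
    intro A G hAG hA
    refine matrix_mul_left_cancel hA ?_
    rw [← Matrix.mul_assoc, ← Matrix.mul_assoc, hAG, hDE]
    simp
  set H : Matrix (Fin ℓ) (Fin ℓ) F[X] := E * G₂ᵀ with hH
  have hdetH : H.det ≠ 0 := by
    rw [hH, Matrix.det_mul, Matrix.det_transpose]
    exact mul_ne_zero hdetE hdetG₂
  have hAH : A₂ᵀ * H = h • (1 : Matrix (Fin ℓ) (Fin ℓ) F[X]) := by
    have h1 := congrArg Matrix.transpose (hGEA A₂ G₂ hA₂ hdetA₂)
    simpa [hH, hE, Matrix.transpose_mul] using h1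
  set K : Matrix (Fin ℓ ⊕ Fin ℓ) (Fin ℓ) F[X] := Matrix.fromRows A₁ᵀ A₂ᵀ with hK
  have hM : Matrix.fromRows (A₁ᵀ * E * G₂ᵀ) (h • (1 : Matrix (Fin ℓ) (Fin ℓ) F[X])) = K * H := by
    rw [hK, Matrix.fromRows_mul, hAH, hH, Matrix.mul_assoc]
  rw [hM] at hQ ⊢
  set CQ := genCode (fun _ => (1 : F)) (fun _ => N) (fun r : Fin ℓ ⊕ Fin ℓ => (K * H) r) with hCQ
  have hset : {q | toCode (fun _ => (1 : F)) (fun _ => N) q ∈ CQ} =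
      (Submodule.span F[X] (Set.range fun r => (K * H) r) : Set (Fin ℓ → F[X])) := by
    refine toCode_mem_genCode hNm _ fun i => ?_
    rw [hdiagN]
    refine Submodule.subset_span ⟨Sum.inr i, ?_⟩
    rw [← hM]
    rfl
  have hspan : Submodule.span F[X] (Set.range fun i => Qm i) =
      Submodule.span F[X] (Set.range fun r => (K * H) r) :=
    SetLike.coe_injective (hQ.2.trans hset)
  -- `B` is the matrix whose rows form a basis of the span of the columns of `A₁` and `A₂`.
  obtain ⟨W₀, hW₀⟩ := exists_mul_of_rows_mem (K * H) Qm fun i => by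
    rw [← hspan]; exact Submodule.subset_span ⟨i, rfl⟩
  obtain ⟨W₁, hW₁⟩ := exists_mul_of_rows_mem Qm (K * H) fun i => by
    rw [hspan]; exact Submodule.subset_span ⟨i, rfl⟩
  obtain ⟨B, hB⟩ : ∃ B, B = W₀ * K := ⟨_, rfl⟩
  have hQB : Qm = B * H := by rw [hB, Matrix.mul_assoc, ← hW₀]
  have hKB : K = W₁ * B := by
    refine matrix_mul_right_cancel hdetH ?_
    rw [hW₁, Matrix.mul_assoc, ← hQB]
  have hPB : P * B = A₂ᵀ := by
    refine matrix_mul_right_cancel hdetH ?_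
    rw [Matrix.mul_assoc, ← hQB, hPQ', hAH]
  have hWB : W₁.toRows₁ * B = A₁ᵀ := by
    ext1 i j
    exact (congrFun (congrFun hKB (Sum.inl i)) j).symm
  have hdetB : B.det ≠ 0 := by
    rw [hQB, Matrix.det_mul] at hdetQ
    exact left_ne_zero_of_mul hdetQ
  -- Each of the five conditions is equivalent to `B` being unimodular.
  have h1 : C₁ ⊓ C₂ = ⊥ ↔ IsUnit B := by
    rw [inf_eq_bot_iff hm hG₁ hG₂]
    constructor
    · intro hc
      have hBt : Bᵀ.det ≠ 0 := by rwa [Matrix.det_transpose]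
      have e1 : Bᵀ * W₁.toRows₁ᵀ = A₁ := by
        rw [← Matrix.transpose_mul, hWB, Matrix.transpose_transpose]
      have e2 : Bᵀ * Pᵀ = A₂ := by
        rw [← Matrix.transpose_mul, hPB, Matrix.transpose_transpose]
      -- The rows of this product lie in both row spans, hence are multiples of `D`.
      have e3 : W₁.toRows₁ᵀ * G₁ = Pᵀ * G₂ := by
        refine matrix_mul_left_cancel hBt ?_
        rw [← Matrix.mul_assoc, ← Matrix.mul_assoc, e1, e2, hA₁, hA₂]
      choose Z hZ using fun i => hc (W₁.toRows₁ᵀ i) (Pᵀ i) (congrFun e3 i)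
      have e4 : Matrix.of Z * D = W₁.toRows₁ᵀ * G₁ := by
        funext i
        exact hZ i
      have e5 : Bᵀ * Matrix.of Z = 1 := by
        refine matrix_mul_right_cancel hdetD ?_
        rw [Matrix.mul_assoc, e4, ← Matrix.mul_assoc, e1, hA₁, Matrix.one_mul]
      exact (Matrix.isUnit_transpose B).1 (IsUnit.of_mul_eq_one _ e5)
    · intro hu a b hab
      obtain ⟨B', hB'⟩ := hu.exists_left_inv
      have e1 : (B' * W₀.toCols₁) * A₁ᵀ + (B' * W₀.toCols₂) * A₂ᵀ = 1 := by
        rw [← hB', hB, hK, Matrix.mul_assoc, Matrix.mul_assoc, ← Matrix.mul_add,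
          ← Matrix.fromCols_mul_fromRows, Matrix.fromCols_toCols]
      have e2 := congrArg Matrix.transpose e1
      rw [Matrix.transpose_add, Matrix.transpose_mul, Matrix.transpose_mul _ A₂ᵀ,
        Matrix.transpose_transpose, Matrix.transpose_transpose, Matrix.transpose_one] at e2
      set Y₁ := (B' * W₀.toCols₁)ᵀ
      set Y₂ := (B' * W₀.toCols₂)ᵀ
      -- With `q = a G₁ = b G₂` one has `q E A₁ = h a` and `q E A₂ = h b`; combine these using the
      -- Bézout identity `A₁ Y₁ + A₂ Y₂ = 1`.
      have e3 : (a ᵥ* G₁) ᵥ* E = h • (a ᵥ* Y₁ + b ᵥ* Y₂) := by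
        have f1 : (a ᵥ* G₁) ᵥ* E ᵥ* (A₁ * Y₁) = h • (a ᵥ* Y₁) := by
          rw [Matrix.vecMul_vecMul, Matrix.vecMul_vecMul, ← Matrix.mul_assoc,
            ← Matrix.mul_assoc, hGEA A₁ G₁ hA₁ hdetA₁, Matrix.smul_mul, Matrix.one_mul,
            Matrix.vecMul_smul]
        have f2 : (a ᵥ* G₁) ᵥ* E ᵥ* (A₂ * Y₂) = h • (b ᵥ* Y₂) := by
          rw [hab, Matrix.vecMul_vecMul, Matrix.vecMul_vecMul, ← Matrix.mul_assoc,
            ← Matrix.mul_assoc, hGEA A₂ G₂ hA₂ hdetA₂, Matrix.smul_mul, Matrix.one_mul,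
            Matrix.vecMul_smul]
        rw [smul_add, ← f1, ← f2, ← Matrix.vecMul_add, e2, Matrix.vecMul_one]
      refine ⟨a ᵥ* Y₁ + b ᵥ* Y₂, smul_right_injective _ hh0 ?_⟩
      change h • _ = h • _
      rw [← Matrix.smul_vecMul, ← e3, Matrix.vecMul_vecMul, hED, Matrix.vecMul_smul,
        Matrix.vecMul_one]
  have h2 : Submodule.span F[X]
      (Set.range (fun j => A₁ᵀ j) ∪ Set.range (fun j => A₂ᵀ j)) = ⊤ ↔ IsUnit B := by
    have hr : Set.range (fun j => A₁ᵀ j) ∪ Set.range (fun j => A₂ᵀ j) =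
        Set.range (fun r => K r) := (Set.Sum.elim_range _ _).symm.trans (by
          congr 1)
    rw [hr]
    constructor
    · intro ht
      obtain ⟨V, hV⟩ := exists_mul_of_rows_mem K
        (1 : Matrix (Fin ℓ) (Fin ℓ) F[X]) fun i => by rw [ht]; trivial
      rw [hKB, ← Matrix.mul_assoc] at hV
      exact IsUnit.of_mul_eq_one_right _ hV.symm
    · intro hu
      obtain ⟨B', hB'⟩ := hu.exists_left_inv
      rw [eq_top_iff]
      intro v _
      refine (mem_rowSpan K v).2 ⟨v ᵥ* (B' * W₀), ?_⟩
      rw [Matrix.vecMul_vecMul, Matrix.mul_assoc, ← hB, hB', Matrix.vecMul_one]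
  have h3 : IsGPM (fun _ => (1 : F)) (fun _ => N) CQ H ↔ IsUnit B := by
    constructor
    · intro hg
      obtain ⟨V, hV⟩ := exists_mul_of_rows_mem Qm H fun i => by
        rw [← SetLike.mem_coe, hQ.2, ← hg.2]
        exact Submodule.subset_span ⟨i, rfl⟩
      refine IsUnit.of_mul_eq_one_right V (matrix_mul_right_cancel hdetH ?_)
      rw [Matrix.mul_assoc, ← hQB, ← hV, Matrix.one_mul]
    · intro hu
      obtain ⟨B', hB'⟩ := hu.exists_left_inv
      have hHQ : H = B' * Qm := by rw [hQB, ← Matrix.mul_assoc, hB', Matrix.one_mul]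
      refine ⟨?_, ?_⟩
      · exact Matrix.linearIndependent_rows_of_det_ne_zero hdetH
      · rw [← hQ.2]
        congr 1
        apply le_antisymm
        · rw [Submodule.span_le]
          rintro _ ⟨i, rfl⟩
          change H i ∈ _
          rw [hHQ]
          exact mul_row_mem _ _ i
        · rw [Submodule.span_le]
          rintro _ ⟨i, rfl⟩
          change Qm i ∈ _
          rw [hQB]
          exact mul_row_mem _ _ i
  have h4 : (∃ U : Matrix (Fin ℓ) (Fin ℓ) F[X], IsUnit U ∧ P * U = A₂ᵀ) ↔ IsUnit B := by
    constructor
    · rintro ⟨U, hU, hPU⟩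
      rwa [← matrix_mul_left_cancel hdetP (hPU.trans hPB.symm)]
    · exact fun hu => ⟨B, hu, hPB⟩
  have h5 : Module.finrank F CQ = Module.finrank F C₂ ↔ IsUnit B := by
    rw [finrank_eq_natDegree hNm CQ Qm P hQ (by rw [hPQ', hdiagN]) hdetP hdetQ,
      finrank_eq_natDegree hm C₂ G₂ A₂ hG₂ hA₂ hdetA₂ hdetG₂, ← Matrix.det_transpose A₂, ← hPB,
      Matrix.det_mul, Polynomial.natDegree_mul hdetP hdetB, Matrix.isUnit_iff_isUnit_det,
      Polynomial.isUnit_iff_degree_eq_zero, Polynomial.degree_eq_natDegree hdetB]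
    norm_cast
    omega
  tfae_have 1 ↔ 2 := h1.trans h2.symm
  tfae_have 2 ↔ 3 := h2.trans h3.symm
  tfae_have 3 ↔ 4 := h3.trans h4.symm
  tfae_have 4 ↔ 5 := h4.trans h5.symm
  tfae_finish
end

section
/- Let q = p^e and 0 ≤ κ < e. Let C be a Λ-MT code over F_q with index ℓ, block lengths (m_1,…,m_ℓ), GPM G, and identical-equation matrix A (so A·G = diag(x^{m_i}−λ_i)), and suppose σ^{e−κ}(Λ^{−1}) = Λ. Assume each entry in the j-th row of A has degree at most m_j, and let N = lcm(t_1 m_1,…,t_ℓ m_ℓ). Then C is κ-Galois dual-containing (i.e., C^{⊥κ} ⊆ C) if and only if σ^{e−κ}(A^T(1/x)·diag(x^{m_i}))·diag((x^N−1)/(x^{m_i}−λ_i))·A ≡ 0 (mod x^N−1). -/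
/-!
Write `D = diag(x^{mⱼ} - λⱼ)`, `P = diag((x^N - 1)/(x^{mⱼ} - λⱼ))`, and let `H` be the matrix
`σ^{e-κ}(Aᵀ(1/x)·diag(x^{mⱼ}))`. The code corresponds to the row module `M` of `G`.

* Pairing. For polynomial vectors `c` and `h` with `deg hⱼ ≤ mⱼ`, put
  `uⱼ = x^{mⱼ} σ^κ(hⱼ)(1/x)`. The `κ`-Galois pairing of the codewords of `c` and `h` is the
  constant term of `∑ⱼ cⱼ uⱼ Pⱼ` modulo `x^N - 1` (`coeff_zero_sum_mod`). Since `M` is stable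
  under multiplication by `x`, the codeword of `h` lies in the Galois dual iff `x^N - 1` divides
  this sum for all `c ∈ M` (`toCode_mem_galoisDualMT_iff`).
* Matrices. From `A G = D` one gets `A (G P) = (x^N - 1) I`, hence also `(G P) A = (x^N - 1) I`.
  Consequently `H P A ≡ 0` modulo `x^N - 1` iff `H = B G` for some polynomial matrix `B`, that is,
  iff all rows of `H` lie in `M`.
* Dual-containing implies rows in `M`: for row `a` of `H` the vector `u` is column `a` of `A`, so
  `G P A = (x^N - 1) I` shows that the row represents a dual codeword.
* Conversely, if `h` represents a dual codeword, then `G P u = (x^N - 1) y` for some `y`, whence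
  `u = A y`. Reflecting this identity writes `x^K h` as a combination of the rows of `H` for any
  large `K`. With `N ∣ K`, the vectors `x^K h` and `h` represent the same codeword.
-/

open Polynomial Matrix

/-! ### Constant terms modulo `x^m - λ` and inner products -/

theorem coeff_zero_X_pow_mul_X_pow_mod {F : Type*} [Field F] (lam : F) {m a b : ℕ}
    (ha : a < m) (hb : b < m) :
    ((X ^ a * X ^ (m - b) : F[X]) %ₘ (X ^ m - C lam)).coeff 0 = if a = b then lam else 0 := by
  have hmon : (X ^ m - C lam : F[X]).Monic := monic_X_pow_sub_C lam (by omega)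
  have key : ∀ k, k < m → (X ^ k : F[X]) %ₘ (X ^ m - C lam) = X ^ k := fun k hk => by
    rw [modByMonic_eq_self_iff hmon, degree_X_pow_sub_C (by omega), degree_X_pow]
    exact_mod_cast hk
  rcases lt_or_ge a b with h | h
  · rw [← pow_add, key _ (by omega), coeff_X_pow, if_neg (by omega), if_neg (by omega)]
  · have h1 : (X ^ a * X ^ (m - b) : F[X]) %ₘ (X ^ m - C lam)
        = (lam • X ^ (a - b) : F[X]) %ₘ (X ^ m - C lam) := by
      refine modByMonic_eq_of_dvd_sub hmon ⟨X ^ (a - b), ?_⟩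
      have : (X ^ a * X ^ (m - b) : F[X]) = X ^ m * X ^ (a - b) := by
        rw [← pow_add, ← pow_add]; congr 1; omega
      rw [this, smul_eq_C_mul]; ring
    rw [h1, smul_modByMonic, key _ (by omega), coeff_smul, coeff_X_pow, smul_eq_mul]
    by_cases hab : a = b
    · simp [hab]
    · rw [if_neg (by omega), if_neg hab, mul_zero]

theorem reflect_finset_sum {R ι : Type*} [Semiring R] (N : ℕ) (s : Finset ι) (f : ι → R[X]) :
    reflect N (∑ i ∈ s, f i) = ∑ i ∈ s, reflect N (f i) := by
  ext n
  simp [coeff_reflect]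

/-- The constant term of `c(x) · x^m r(1/x)` modulo `x^m - λ` is `λ` times the standard inner
product of the coefficient vectors of `c mod (x^m - λ)` and `r`. -/
theorem coeff_zero_mul_reflect_mod {F : Type*} [Field F] (lam : F) {m : ℕ} (hm : 0 < m)
    (c r : F[X]) (hr : r.natDegree < m) :
    ((c * reflect m r) %ₘ (X ^ m - C lam)).coeff 0
      = lam * ∑ a : Fin m, (c %ₘ (X ^ m - C lam)).coeff a * r.coeff a := by
  have hmon : (X ^ m - C lam : F[X]).Monic := monic_X_pow_sub_C lam hm.ne'
  have hc : (c %ₘ (X ^ m - C lam)).natDegree < m := by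
    have := natDegree_modByMonic_lt c hmon
      (fun h => by
        have := congrArg natDegree h
        rw [natDegree_X_pow_sub_C] at this
        simp at this; omega)
    rwa [natDegree_X_pow_sub_C] at this
  have h1 : (c * reflect m r) %ₘ (X ^ m - C lam)
      = ((c %ₘ (X ^ m - C lam)) * reflect m r) %ₘ (X ^ m - C lam) := by
    refine modByMonic_eq_of_dvd_sub hmon ?_
    rw [← sub_mul]
    exact Dvd.dvd.mul_right ((dvd_sub_comm).1 (dvd_modByMonic_sub c _)) _
  rw [h1]
  generalize c %ₘ (X ^ m - C lam) = c' at hc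
  have h2 : c' * reflect m r = ∑ a ∈ Finset.range m, ∑ b ∈ Finset.range m,
      (c'.coeff a * r.coeff b) • (X ^ a * X ^ (m - b) : F[X]) := by
    conv_lhs => rw [as_sum_range_C_mul_X_pow' c' hc, as_sum_range_C_mul_X_pow' r hr]
    rw [reflect_finset_sum, Finset.sum_mul_sum]
    refine Finset.sum_congr rfl fun a _ => Finset.sum_congr rfl fun b hb => ?_
    rw [reflect_C_mul_X_pow, revAt_le (Finset.mem_range.1 hb).le, smul_eq_C_mul, C_mul]
    ring
  have h3 : ∀ f : F[X], (f %ₘ (X ^ m - C lam)).coeff 0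
      = ((lcoeff F 0).comp (modByMonicHom (X ^ m - C lam))) f := fun f => rfl
  rw [h3, h2]
  simp only [map_sum, map_smul]
  simp only [← h3]
  rw [Finset.mul_sum, Fin.sum_univ_eq_sum_range (fun a => lam * (c'.coeff a * r.coeff a))]
  refine Finset.sum_congr rfl fun a ha => ?_
  rw [Finset.sum_eq_single_of_mem a ha]
  · rw [coeff_zero_X_pow_mul_X_pow_mod lam (Finset.mem_range.1 ha) (Finset.mem_range.1 ha)]
    simp [mul_comm]
  · intro b hb hba
    rw [coeff_zero_X_pow_mul_X_pow_mod lam (Finset.mem_range.1 ha) (Finset.mem_range.1 hb),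
      if_neg (Ne.symm hba), smul_zero]

/-- A polynomial is divisible by `x^N - 1` as soon as all its multiples by powers of `x` have
vanishing constant term modulo `x^N - 1`. -/
theorem X_pow_sub_one_dvd_of_coeff_zero {F : Type*} [Field F] {N : ℕ} (hN : 0 < N) (S : F[X])
    (h : ∀ k, ((X ^ k * S) %ₘ (X ^ N - 1)).coeff 0 = 0) : (X ^ N - 1 : F[X]) ∣ S := by
  have hmon : (X ^ N - 1 : F[X]).Monic := by
    simpa using monic_X_pow_sub_C (1 : F) hN.ne'
  have hdeg : (X ^ N - 1 : F[X]).degree = N := by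
    simpa using degree_X_pow_sub_C hN (1 : F)
  rw [← modByMonic_eq_zero_iff_dvd hmon]
  ext i
  rw [coeff_zero]
  rcases lt_or_ge i N with hi | hi
  · -- the `i`-th coefficient is read off as the pairing of `S` with `x^i`
    have h1 := coeff_zero_mul_reflect_mod (1 : F) hN S (X ^ i) (by rwa [natDegree_X_pow])
    rw [reflect_monomial, map_one, mul_comm, h, one_mul,
      Finset.sum_eq_single_of_mem (⟨i, hi⟩ : Fin N) (Finset.mem_univ _)] at h1
    · simpa using h1.symm
    · intro b _ hb
      have : (b : ℕ) ≠ i := fun hh => hb (Fin.ext hh)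
      simp [coeff_X_pow, this]
  · apply coeff_eq_zero_of_degree_lt
    refine (degree_modByMonic_lt S hmon).trans_le ?_
    rw [hdeg]; exact_mod_cast hi

/-- Galois version of `coeff_zero_mul_reflect_mod`, for a polynomial `h` of degree at most `m`
that need not be reduced modulo `x^m - λ`. The hypothesis `φ λ = λ⁻¹` makes the reflection
of `φ(x^m - λ)` a multiple of `x^m - λ`. -/
theorem coeff_zero_mul_reflect_map_mod {F : Type*} [Field F] (φ : F →+* F) {lam : F}
    (hlam : lam ≠ 0) (hφ : φ lam = lam⁻¹) {m : ℕ} (hm : 0 < m)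
    (c h : F[X]) (hh : h.natDegree ≤ m) :
    ((c * reflect m (h.map φ)) %ₘ (X ^ m - C lam)).coeff 0
      = lam * ∑ a : Fin m, (c %ₘ (X ^ m - C lam)).coeff a
          * φ ((h %ₘ (X ^ m - C lam)).coeff a) := by
  have hmon : (X ^ m - C lam : F[X]).Monic := monic_X_pow_sub_C lam hm.ne'
  have hr : ((h %ₘ (X ^ m - C lam)).map φ).natDegree < m := by
    rw [natDegree_map]
    have := natDegree_modByMonic_lt h hmon
      (fun h => by
        have := congrArg natDegree h
        rw [natDegree_X_pow_sub_C] at this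
        simp at this; omega)
    rwa [natDegree_X_pow_sub_C] at this
  have h1 := coeff_zero_mul_reflect_mod lam hm c _ hr
  simp only [coeff_map] at h1
  rw [← h1]
  congr 1
  refine modByMonic_eq_of_dvd_sub hmon ?_
  rw [← mul_sub]
  apply Dvd.dvd.mul_left
  have hq : h /ₘ (X ^ m - C lam) = C ((h /ₘ (X ^ m - C lam)).coeff 0) := by
    apply eq_C_of_natDegree_le_zero
    rw [natDegree_divByMonic h hmon, natDegree_X_pow_sub_C]; omega
  set a := (h /ₘ (X ^ m - C lam)).coeff 0
  have h2 : h = h %ₘ (X ^ m - C lam) + C a * (X ^ m - C lam) := by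
    conv_lhs => rw [← modByMonic_add_div h (X ^ m - C lam), hq]
    ring
  have hrefl : reflect m (X ^ m - C lam⁻¹ : F[X]) = 1 - C lam⁻¹ * X ^ m := by
    have h4 : reflect m (X ^ m : F[X]) = 1 := by
      rw [reflect_monomial, revAt_le le_rfl, Nat.sub_self, pow_zero]
    have h5 := reflect_add (X ^ m - C lam⁻¹ : F[X]) (C lam⁻¹) m
    rw [sub_add_cancel, h4, reflect_C] at h5
    exact eq_sub_of_add_eq h5.symm
  have h3 : reflect m (h.map φ) = reflect m ((h %ₘ (X ^ m - C lam)).map φ)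
      + C (φ a) * (1 - C lam⁻¹ * X ^ m) := by
    conv_lhs => rw [h2]
    rw [Polynomial.map_add, Polynomial.map_mul, reflect_add, map_C, reflect_C_mul,
      Polynomial.map_sub, Polynomial.map_pow, map_X, map_C, hφ, hrefl]
  rw [h3, add_sub_cancel_left]
  refine ⟨-C (φ a) * C lam⁻¹, ?_⟩
  have : (C lam * C lam⁻¹ : F[X]) = 1 := by rw [← C_mul, mul_inv_cancel₀ hlam, C_1]
  linear_combination (-C (φ a)) * this

/-! ### The Galois dual in terms of polynomial vectors -/

/-- The Galois pairing of two codewords is the constant term of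
`∑ⱼ cⱼ(x) · x^{mⱼ} φ(hⱼ)(1/x) · (x^N - 1)/(x^{mⱼ} - λⱼ)` modulo `x^N - 1`. -/
theorem coeff_zero_sum_mod {F : Type*} [Field F] (φ : F →+* F) {ℓ : ℕ} {lam : Fin ℓ → F}
    (hlam : ∀ j, lam j ≠ 0) (hφ : ∀ j, φ (lam j) = (lam j)⁻¹) {m : Fin ℓ → ℕ}
    (hm : ∀ j, 0 < m j) {N : ℕ} (hN : 0 < N) {P : Fin ℓ → F[X]}
    (hP : ∀ j, (X ^ m j - C (lam j)) * P j = X ^ N - 1) (c h : Fin ℓ → F[X])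
    (hh : ∀ j, (h j).natDegree ≤ m j) :
    ((∑ j, c j * reflect (m j) ((h j).map φ) * P j) %ₘ (X ^ N - 1)).coeff 0
      = ∑ j, ∑ a, toCode lam m c j a * φ (toCode lam m h j a) := by
  have hmon : (X ^ N - 1 : F[X]).Monic := by
    simpa using monic_X_pow_sub_C (1 : F) hN.ne'
  have h3 : ∀ f : F[X], (f %ₘ (X ^ N - 1)).coeff 0
      = ((lcoeff F 0).comp (modByMonicHom (X ^ N - 1))) f := fun f => rfl
  rw [h3, map_sum]
  simp only [← h3]
  refine Finset.sum_congr rfl fun j _ => ?_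
  have hd : (X ^ m j - C (lam j) : F[X]).Monic := monic_X_pow_sub_C _ (hm j).ne'
  have hP0 : P j ≠ 0 := fun h0 => hmon.ne_zero (by rw [← hP j, h0, mul_zero])
  have hPc : lam j * (P j).coeff 0 = 1 := by
    have := congrArg (fun f => coeff f 0) (hP j)
    simp [mul_coeff_zero, coeff_X_pow, (hm j).ne, hN.ne] at this
    linear_combination this
  set f := c j * reflect (m j) ((h j).map φ) with hf
  have h4 : (f * P j) %ₘ (X ^ N - 1) = (f %ₘ (X ^ m j - C (lam j))) * P j := by
    refine (div_modByMonic_unique (f /ₘ (X ^ m j - C (lam j))) _ hmon ⟨?_, ?_⟩).2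
    · rw [← hP j]
      linear_combination P j * modByMonic_add_div f (X ^ m j - C (lam j))
    · rw [← hP j, degree_mul, degree_mul]
      exact WithBot.add_lt_add_right (degree_eq_bot.not.2 hP0) (degree_modByMonic_lt f hd)
  rw [h4, mul_coeff_zero, hf,
    coeff_zero_mul_reflect_map_mod φ (hlam j) (hφ j) (hm j) (c j) (h j) (hh j)]
  simp only [toCode]
  linear_combination (∑ a : Fin (m j), (c j %ₘ (X ^ m j - C (lam j))).coeff a
          * φ ((h j %ₘ (X ^ m j - C (lam j))).coeff a)) * hPc

theorem toCode_ofFn {F : Type*} [Field F] [DecidableEq F] {ℓ : ℕ} (lam : Fin ℓ → F)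
    {m : Fin ℓ → ℕ} (hm : ∀ j, 0 < m j) (v : ∀ i, Fin (m i) → F) :
    toCode lam m (fun i => ofFn (m i) (v i)) = v := by
  funext i j
  have hd : (X ^ m i - C (lam i) : F[X]).Monic := monic_X_pow_sub_C _ (hm i).ne'
  simp only [toCode]
  rw [(modByMonic_eq_self_iff hd).2, ofFn_coeff_eq_val_of_lt _ j.isLt]
  rw [degree_X_pow_sub_C (hm i)]
  exact ofFn_degree_lt _

theorem toCode_congr {F : Type*} [Field F] {ℓ : ℕ} {lam : Fin ℓ → F}
    {m : Fin ℓ → ℕ} (hm : ∀ j, 0 < m j) {f g : Fin ℓ → F[X]}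
    (h : ∀ j, (X ^ m j - C (lam j)) ∣ f j - g j) : toCode lam m f = toCode lam m g := by
  funext i j
  simp only [toCode]
  rw [modByMonic_eq_of_dvd_sub (monic_X_pow_sub_C _ (hm i).ne') (h i)]

/-- Polynomial description of the Galois dual: orthogonality to a code stable under
multiplication by `x` is a divisibility by `x^N - 1`. -/
theorem toCode_mem_galoisDualMT_iff {p κ : ℕ} [Fact p.Prime] {F : Type*} [Field F] [CharP F p]
    {ℓ : ℕ} {lam : Fin ℓ → F} (hlam : ∀ j, lam j ≠ 0)
    (hφ : ∀ j, powFrob F p κ (lam j) = (lam j)⁻¹) {m : Fin ℓ → ℕ}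
    (hm : ∀ j, 0 < m j) {N : ℕ} (hN : 0 < N) {P : Fin ℓ → F[X]}
    (hP : ∀ j, (X ^ m j - C (lam j)) * P j = X ^ N - 1)
    {CC : Submodule F (∀ i, Fin (m i) → F)}
    (hX : ∀ (k : ℕ) (c : Fin ℓ → F[X]), toCode lam m c ∈ CC →
      toCode lam m (fun j => X ^ k * c j) ∈ CC)
    (h : Fin ℓ → F[X]) (hh : ∀ j, (h j).natDegree ≤ m j) :
    toCode lam m h ∈ galoisDualMT p κ CC ↔ ∀ c : Fin ℓ → F[X], toCode lam m c ∈ CC →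
      (X ^ N - 1 : F[X]) ∣ ∑ j, c j * reflect (m j) ((h j).map (powFrob F p κ)) * P j := by
  classical
  have key := fun c => coeff_zero_sum_mod (powFrob F p κ) hlam hφ hm hN hP c h hh
  constructor
  · intro hd c hc
    refine X_pow_sub_one_dvd_of_coeff_zero hN _ fun k => ?_
    have h1 := key (fun j => X ^ k * c j)
    rw [Finset.mul_sum]
    simp only [mul_assoc] at h1 ⊢
    rw [h1]
    exact hd _ (hX k c hc)
  · intro hd c hc
    have h1 := key (fun i => ofFn (m i) (c i))
    have h2 := hd (fun i => ofFn (m i) (c i)) (by rwa [toCode_ofFn lam hm])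
    have hmon : (X ^ N - 1 : F[X]).Monic := by
      simpa using monic_X_pow_sub_C (1 : F) hN.ne'
    rw [(modByMonic_eq_zero_iff_dvd hmon).2 h2, coeff_zero, toCode_ofFn lam hm] at h1
    exact h1.symm

/-! ### Matrices over a domain -/

/-- A right inverse up to a nonzero scalar of a square matrix over a domain is also a left
inverse up to that scalar. -/
theorem mul_eq_smul_one_comm_of_ne_zero {R : Type*} [CommRing R] [IsDomain R] {ℓ : ℕ}
    {A Q : Matrix (Fin ℓ) (Fin ℓ) R} {s : R} (hs : s ≠ 0) (h : A * Q = s • 1) :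
    A.det ≠ 0 ∧ Q * A = s • 1 := by
  have hdet : A.det ≠ 0 := by
    intro h0
    have := congrArg Matrix.det h
    rw [det_mul, h0, zero_mul, det_smul, det_one, mul_one] at this
    exact pow_ne_zero _ hs this.symm
  refine ⟨hdet, ?_⟩
  have h1 : A * (Q * A) = A * (s • 1) := by
    rw [← Matrix.mul_assoc, h]; simp
  have h2 := congrArg (fun M => A.adjugate * M) h1
  simp only [← Matrix.mul_assoc, adjugate_mul] at h2
  simp only [Matrix.smul_mul, Matrix.one_mul] at h2
  exact smul_right_injective _ hdet h2

/-! ### The dual-containing criterion -/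

/-- Let `q = p^e`, `0 ≤ κ < e`, and let `C` be a Λ-MT code with GPM `G`
and identical-equation matrix `A`, with `σ^{e-κ}(Λ⁻¹) = Λ`, entries of row `j` of `A` of
degree at most `mⱼ` and `N = lcm(tᵢ mᵢ)`.  Then `C` is κ-Galois dual-containing iff
`σ^{e-κ}(Aᵀ(1/x)·diag(x^{mᵢ}))·diag((x^N-1)/(x^{mᵢ}-λᵢ))·A ≡ 0 (mod x^N-1)`. -/
theorem stmt17 {p e : ℕ} [Fact p.Prime] {F : Type*} [Field F] [Fintype F] [CharP F p]
    (hcard : Fintype.card F = p ^ e) {κ : ℕ} (hκ : κ < e)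
    {ℓ : ℕ} {m : Fin ℓ → ℕ} (hm : ∀ i, 0 < m i)
    {lam : Fin ℓ → F} (hlam : ∀ i, lam i ≠ 0)
    (hσΛ : ∀ i, ((lam i)⁻¹) ^ p ^ (e - κ) = lam i)
    (CC : Submodule F (∀ i, Fin (m i) → F)) (hC : IsMT lam CC)
    (G A : Matrix (Fin ℓ) (Fin ℓ) (Polynomial F)) (hG : IsGPM lam m CC G)
    (hA : A * G = Matrix.diagonal (fun i => X ^ (m i) - Polynomial.C (lam i)))
    (hdeg : ∀ i j, (A j i).natDegree ≤ m j)
    {N : ℕ} (hN : N = Finset.univ.lcm (fun i => orderOf (lam i) * m i)) :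
    galoisDualMT p κ CC ≤ CC ↔
      ∀ i j : Fin ℓ, (X ^ N - 1 : Polynomial F) ∣
        (((Matrix.of fun a b =>
            Polynomial.map (powFrob F p (e - κ)) (Polynomial.reflect (m b) (A b a))) *
          Matrix.diagonal (fun i => (X ^ N - 1) / (X ^ (m i) - Polynomial.C (lam i))) *
          A : Matrix (Fin ℓ) (Fin ℓ) (Polynomial F))) i j := by
  classical
  have ht : ∀ i, 0 < orderOf (lam i) := fun i => by
    rw [orderOf_pos_iff, isOfFinOrder_iff_pow_eq_one]
    exact ⟨Fintype.card F - 1, Nat.sub_pos_of_lt Fintype.one_lt_card,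
      FiniteField.pow_card_sub_one_eq_one _ (hlam i)⟩
  have hN0 : 0 < N := by
    rw [Nat.pos_iff_ne_zero, hN]
    intro h
    obtain ⟨i, -, hi⟩ := Finset.lcm_eq_zero_iff.1 h
    exact (Nat.mul_pos (ht i) (hm i)).ne' hi
  have hφ : ∀ j, powFrob F p κ (lam j) = (lam j)⁻¹ := fun j => by
    change lam j ^ p ^ κ = _
    conv_lhs => rw [← hσΛ j]
    rw [← pow_mul, ← pow_add, Nat.sub_add_cancel hκ.le, ← hcard, FiniteField.pow_card]
  have hτφ : (powFrob F p (e - κ)).comp (powFrob F p κ) = RingHom.id F := by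
    ext a
    change (a ^ p ^ κ) ^ p ^ (e - κ) = a
    rw [← pow_mul, ← pow_add, Nat.add_sub_cancel' hκ.le, ← hcard, FiniteField.pow_card]
  have hφτ : (powFrob F p κ).comp (powFrob F p (e - κ)) = RingHom.id F := by
    ext a
    change (a ^ p ^ (e - κ)) ^ p ^ κ = a
    rw [← pow_mul, ← pow_add, Nat.sub_add_cancel hκ.le, ← hcard, FiniteField.pow_card]
  have hmon : (X ^ N - 1 : F[X]).Monic := by
    simpa using monic_X_pow_sub_C (1 : F) hN0.ne'
  have hdvd : ∀ i, (X ^ m i - C (lam i) : F[X]) ∣ X ^ N - 1 := fun i => by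
    have h1 : orderOf (lam i) * m i ∣ N := hN ▸ Finset.dvd_lcm (Finset.mem_univ i)
    obtain ⟨k, hk⟩ := h1
    have h2 : (X ^ N - 1 : F[X]) = (X ^ m i) ^ (orderOf (lam i) * k)
        - (C (lam i)) ^ (orderOf (lam i) * k) := by
      rw [← C_pow, pow_mul (lam i), pow_orderOf_eq_one, one_pow, C_1, ← pow_mul, hk]
      congr 2; ring
    rw [h2]
    exact sub_dvd_pow_sub_pow _ _ _
  set P : Fin ℓ → F[X] := fun i => (X ^ N - 1) / (X ^ m i - C (lam i)) with hPdef
  have hP : ∀ j, (X ^ m j - C (lam j)) * P j = X ^ N - 1 := fun j =>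
    EuclideanDomain.mul_div_cancel' (monic_X_pow_sub_C _ (hm j).ne').ne_zero (hdvd j)
  obtain ⟨-, hspan⟩ := hG
  have hmem : ∀ c : Fin ℓ → F[X], toCode lam m c ∈ CC ↔ ∃ b : Fin ℓ → F[X], b ᵥ* G = c := by
    intro c
    have h1 : c ∈ (Submodule.span F[X] (Set.range fun i => G i) : Set (Fin ℓ → F[X])) ↔
        toCode lam m c ∈ CC := by rw [hspan]; rfl
    rw [← h1, SetLike.mem_coe, Submodule.mem_span_range_iff_exists_fun]
    refine exists_congr fun b => ?_
    rw [vecMul_eq_sum]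
  have hX : ∀ (k : ℕ) (c : Fin ℓ → F[X]), toCode lam m c ∈ CC →
      toCode lam m (fun j => X ^ k * c j) ∈ CC := by
    intro k c hc
    obtain ⟨b, rfl⟩ := (hmem c).1 hc
    exact (hmem _).2 ⟨(X ^ k : F[X]) • b, by rw [smul_vecMul]; rfl⟩
  -- `A` and `G * diagonal P` are inverse to each other up to the factor `X ^ N - 1`
  have hAGP : A * (G * diagonal P) = (X ^ N - 1 : F[X]) • 1 := by
    rw [← Matrix.mul_assoc, hA, diagonal_mul_diagonal, smul_one_eq_diagonal]
    congr 1; funext i; exact hP i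
  obtain ⟨-, hGPA⟩ := mul_eq_smul_one_comm_of_ne_zero hmon.ne_zero hAGP
  set H : Matrix (Fin ℓ) (Fin ℓ) F[X] := Matrix.of fun a b =>
    Polynomial.map (powFrob F p (e - κ)) (Polynomial.reflect (m b) (A b a)) with hH
  -- the divisibility condition says that the rows of `H` lie in the module of the code
  have hcond : (∀ i j : Fin ℓ, (X ^ N - 1 : F[X]) ∣ (H * diagonal P * A) i j) ↔
      ∃ B : Matrix (Fin ℓ) (Fin ℓ) F[X], H = B * G := by
    constructor
    · intro h
      choose B hB using h
      refine ⟨Matrix.of B, ?_⟩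
      have h1 : H * diagonal P * A = (X ^ N - 1 : F[X]) • Matrix.of B := by
        ext1 i j; rw [hB i j]; rfl
      have h2 : (X ^ N - 1 : F[X]) • H = (X ^ N - 1 : F[X]) • (Matrix.of B * G) := by
        rw [← Matrix.smul_mul, ← h1, Matrix.mul_assoc, hA, Matrix.mul_assoc,
          diagonal_mul_diagonal]
        have : (diagonal fun i => P i * (X ^ m i - C (lam i)))
            = (X ^ N - 1 : F[X]) • (1 : Matrix (Fin ℓ) (Fin ℓ) F[X]) := by
          rw [smul_one_eq_diagonal]; congr 1; funext i; rw [mul_comm]; exact hP i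
        rw [this]; simp
      exact smul_right_injective _ hmon.ne_zero h2
    · rintro ⟨B, hB⟩ i j
      rw [hB, Matrix.mul_assoc B, Matrix.mul_assoc, hGPA]
      exact ⟨B i j, by simp⟩
  rw [hcond]
  have hdual := fun h hh => toCode_mem_galoisDualMT_iff (p := p) hlam hφ hm hN0 hP hX h hh
  constructor
  · intro hle
    have hrow : ∀ a, ∃ b : Fin ℓ → F[X], b ᵥ* G = H a := by
      intro a
      rw [← hmem]
      apply hle
      rw [hdual]
      · intro c hc
        obtain ⟨b, rfl⟩ := (hmem c).1 hc
        have h1 : ∀ j, reflect (m j) ((H a j).map (powFrob F p κ)) = A j a := fun j => by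
          simp [hH, Polynomial.map_map, hφτ]
        have h2 : ∑ j, (b ᵥ* G) j * reflect (m j) ((H a j).map (powFrob F p κ)) * P j
            = (b ᵥ* (G * diagonal P * A)) a := by
          rw [← vecMul_vecMul, ← vecMul_vecMul]
          simp only [h1]
          conv_rhs => rw [vecMul, dotProduct]
          refine Finset.sum_congr rfl fun j _ => ?_
          rw [vecMul_diagonal]; ring
        rw [h2, hGPA]
        exact ⟨b a, by simp [vecMul_smul]⟩
      · intro j
        simp only [hH, Matrix.of_apply, natDegree_map]
        exact natDegree_reflect_le.trans (max_le le_rfl (hdeg _ _))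
    choose B hB using hrow
    refine ⟨Matrix.of B, ?_⟩
    funext a
    rw [← hB a]; rfl
  · rintro ⟨B, hB⟩ v hv
    set w : Fin ℓ → F[X] := fun i => ofFn (m i) (v i) with hw
    have hwv : toCode lam m w = v := toCode_ofFn lam hm v
    have hwdeg : ∀ j, (w j).natDegree ≤ m j := fun j => (ofFn_natDegree_lt (hm j) _).le
    rw [← hwv] at hv ⊢
    set u : Fin ℓ → F[X] := fun j => reflect (m j) ((w j).map (powFrob F p κ)) with hu
    have hudeg : ∀ j, (u j).natDegree ≤ m j := fun j =>
      natDegree_reflect_le.trans (max_le le_rfl (by rw [natDegree_map]; exact hwdeg j))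
    -- orthogonality to the rows of `G` solves `u = A y`
    have hy : ∀ i, (X ^ N - 1 : F[X]) ∣ ((G * diagonal P) *ᵥ u) i := by
      intro i
      have h1 := (hdual w hwdeg).1 hv (G i) ((hmem _).2 ⟨Pi.single i 1, by simp; rfl⟩)
      convert h1 using 1
      rw [mulVec, dotProduct]
      refine Finset.sum_congr rfl fun j _ => ?_
      rw [mul_diagonal]; ring
    choose y hy using hy
    have huy : u = A *ᵥ y := by
      have h1 : (G * diagonal P) *ᵥ u = (X ^ N - 1 : F[X]) • y := funext hy
      have h2 := congrArg (fun z => A *ᵥ z) h1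
      simp only [mulVec_mulVec, hAGP, smul_mulVec, one_mulVec, mulVec_smul] at h2
      exact smul_right_injective _ hmon.ne_zero h2
    -- reflecting back gives `X ^ K • w` as a combination of the rows of `H`; taking `K` to be a
    -- multiple of `N` makes `X ^ K` act trivially on codewords
    set K := N * (Finset.univ.sup fun a => (y a).natDegree) with hK
    have hyK : ∀ a, (y a).natDegree ≤ K := fun a =>
      (Finset.le_sup (f := fun a => (y a).natDegree) (Finset.mem_univ a)).trans
        (Nat.le_mul_of_pos_left _ hN0)
    have hXw : ∀ j, X ^ K * w j
        = ∑ a, H a j * (reflect K (y a)).map (powFrob F p (e - κ)) := by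
      intro j
      have h1 : reflect (m j + K) (u j * 1) = ∑ a, reflect (m j) (A j a) * reflect K (y a) := by
        rw [mul_one, huy, mulVec, dotProduct, reflect_finset_sum]
        exact Finset.sum_congr rfl fun a _ => reflect_mul _ _ (hdeg a j) (hyK a)
      rw [reflect_mul _ _ (hudeg j) (by simp), reflect_one, hu, reflect_reflect] at h1
      have h2 := congrArg (Polynomial.map (powFrob F p (e - κ))) h1
      rw [Polynomial.map_mul, Polynomial.map_map, hτφ, Polynomial.map_id, Polynomial.map_pow,
        map_X, Polynomial.map_sum] at h2
      rw [mul_comm, h2]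
      exact Finset.sum_congr rfl fun a _ => by rw [Polynomial.map_mul]; rfl
    have hXwmem : toCode lam m (fun j => X ^ K * w j) ∈ CC := by
      rw [hmem]
      refine ⟨(fun a => (reflect K (y a)).map (powFrob F p (e - κ))) ᵥ* B, ?_⟩
      rw [vecMul_vecMul, ← hB]
      funext j
      rw [hXw, vecMul, dotProduct]
      exact Finset.sum_congr rfl fun a _ => mul_comm _ _
    rwa [toCode_congr (g := w) hm] at hXwmem
    intro j
    refine (hdvd j).trans ?_
    have h1 : (X ^ N - 1 : F[X]) ∣ X ^ K - 1 := by
      rw [hK, pow_mul]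
      exact sub_one_dvd_pow_sub_one _ _
    have h2 : X ^ K * w j - w j = (X ^ K - 1) * w j := by ring
    rw [h2]
    exact h1.mul_right _
end
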